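/- arXiv:math/0504245 — 5 statements merged into one kernel-verified Lean document; each statement's English description precedes it below -/
import Mathlib

section
/- Let f be a non-constant meromorphic function on ℂ of finite order, let c, h ∈ ℂ and let δ < 1. Then m(r, f(z+c)/f(z+h)) = o( T(r+|c−h|+|h|, f) / r^δ ) as r → ∞, for all r outside a possible exceptional set of finite logarithmic measure. -/
open MeasureTheory Filter Topology Metric

noncomputable section

/-- Positive part of the logarithm: `log⁺ x = max (log x) 0`. -/
def logPlus (x : ℝ) : ℝ := max (Real.log x) 0

/-- The point `r e^{iθ}` on the circle of radius `r`. -/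
def circ (r θ : ℝ) : ℂ := (r : ℂ) * Complex.exp (θ * Complex.I)

/-- Nevanlinna proximity function `m(r, f)`. -/
def nevm (f : ℂ → ℂ) (r : ℝ) : ℝ :=
  (2 * Real.pi)⁻¹ * ∫ θ in (0:ℝ)..(2 * Real.pi), logPlus ‖f (circ r θ)‖

/-- Order of the pole of `f` at `x` (`0` if `f` extends analytically over `x`);
determined through the punctured neighbourhood of `x`. -/
def poleOrd (f : ℂ → ℂ) (x : ℂ) : ℕ :=
  sInf {n : ℕ | ∃ g : ℂ → ℂ, AnalyticAt ℂ g x ∧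
    ∀ᶠ w in 𝓝[≠] x, (w - x) ^ n * f w = g w}

/-- Unintegrated counting function `n(r, f)`: number of poles of `f` in `|z| ≤ r`,
counted with multiplicity. -/
def nevn (f : ℂ → ℂ) (r : ℝ) : ℕ := ∑ᶠ z ∈ closedBall (0:ℂ) r, poleOrd f z

/-- Integrated counting function `N(r, f)`. -/
def nevN (f : ℂ → ℂ) (r : ℝ) : ℝ :=
  (∫ t in (0:ℝ)..r, ((nevn f t : ℝ) - (nevn f 0 : ℝ)) / t) + (nevn f 0 : ℝ) * Real.log r

/-- Nevanlinna characteristic `T(r, f) = m(r, f) + N(r, f)`. -/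
def nevT (f : ℂ → ℂ) (r : ℝ) : ℝ := nevm f r + nevN f r

/-- A subset of `(0, ∞)` has finite logarithmic measure: `∫_E dr/r < ∞`. -/
def FinLogMeasure (E : Set ℝ) : Prop :=
  E ⊆ Set.Ioi 0 ∧ ∫⁻ r in E, ENNReal.ofReal r⁻¹ < ⊤

/-- `f` is a non-constant function. -/
def Nonconstant (f : ℂ → ℂ) : Prop := ¬ ∃ a : ℂ, ∀ z : ℂ, f z = a

/-- `f` has finite order: `limsup_{r→∞} log T(r,f) / log r < ∞`. -/
def FiniteOrder (f : ℂ → ℂ) : Prop :=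
  IsBoundedUnder (· ≤ ·) atTop fun r : ℝ => Real.log (nevT f r) / Real.log r

end


lemma nevm_eq (f : ℂ → ℂ) (r : ℝ) :
    nevm f r = Real.circleAverage (fun z => Real.posLog ‖f z‖) 0 r := by
  unfold nevm
  rw [Real.circleAverage_def, smul_eq_mul]
  simp only [circ, circleMap, zero_add, logPlus, Real.posLog, max_comm]

lemma poleOrd_eq {f : ℂ → ℂ} (hf : Meromorphic f) (x : ℂ) :
    ((poleOrd f x : ℕ) : ℤ) = (MeromorphicOn.divisor f Set.univ)⁻ x := by
  rw [Function.locallyFinsuppWithin.negPart_apply,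
    MeromorphicOn.divisor_apply (fun z _ => hf z) (Set.mem_univ x)]
  have key : ∀ n : ℕ, (∃ g : ℂ → ℂ, AnalyticAt ℂ g x ∧
      ∀ᶠ w in 𝓝[≠] x, (w - x) ^ n * f w = g w) ↔
      (((meromorphicOrderAt f x).untop₀)⁻).toNat ≤ n := by
    intro n
    have hpow : meromorphicOrderAt (fun w : ℂ => (w - x) ^ n) x = (n : ℤ) := by
      rw [meromorphicOrderAt_eq_int_iff (by fun_prop)]
      exact ⟨fun _ => 1, analyticAt_const, one_ne_zero, by simp⟩
    have hmul : meromorphicOrderAt (fun w : ℂ => (w - x) ^ n * f w) x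
        = (n : ℤ) + meromorphicOrderAt f x := by
      rw [← hpow]
      exact meromorphicOrderAt_mul (f := fun w : ℂ => (w - x) ^ n) (by fun_prop) (hf x)
    have hmer : MeromorphicAt (fun w : ℂ => (w - x) ^ n * f w) x :=
      MeromorphicAt.mul (f := fun w : ℂ => (w - x) ^ n) (by fun_prop) (hf x)
    have h0 : (∃ g : ℂ → ℂ, AnalyticAt ℂ g x ∧
      ∀ᶠ w in 𝓝[≠] x, (w - x) ^ n * f w = g w) ↔
        0 ≤ meromorphicOrderAt (fun w : ℂ => (w - x) ^ n * f w) x := by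
      constructor
      · rintro ⟨g, hg, hfg⟩
        rw [meromorphicOrderAt_congr hfg]
        exact hg.meromorphicOrderAt_nonneg
      · intro h
        by_cases ht : meromorphicOrderAt (fun w : ℂ => (w - x) ^ n * f w) x = ⊤
        · exact ⟨fun _ => 0, analyticAt_const, meromorphicOrderAt_eq_top_iff.1 ht⟩
        · obtain ⟨m, hm⟩ := WithTop.ne_top_iff_exists.1 ht
          rw [← hm] at h
          have hm0 : 0 ≤ m := by exact_mod_cast h
          obtain ⟨g, hg, -, hfg⟩ := (meromorphicOrderAt_eq_int_iff hmer).1 hm.symm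
          obtain ⟨k, rfl⟩ := Int.eq_ofNat_of_zero_le hm0
          refine ⟨fun w => (w - x) ^ k * g w, by fun_prop, ?_⟩
          filter_upwards [hfg] with w hw
          rw [hw]; simp
    rw [h0, hmul]
    by_cases ht : meromorphicOrderAt f x = ⊤
    · simp [ht]
    · obtain ⟨m, hm⟩ := WithTop.ne_top_iff_exists.1 ht
      rw [← hm]
      simp only [WithTop.untop₀_coe]
      have : (0 : WithTop ℤ) ≤ (n : ℤ) + (m : WithTop ℤ) ↔ 0 ≤ (n:ℤ) + m := by
        norm_cast
      rw [this, negPart_def]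
      simp only [Int.toNat_le, sup_le_iff]
      omega
  have : poleOrd f x = (((meromorphicOrderAt f x).untop₀)⁻).toNat := by
    unfold poleOrd
    simp only [key]
    apply le_antisymm
    · exact Nat.sInf_le (by simp)
    · exact le_csInf ⟨_, le_refl (((meromorphicOrderAt f x).untop₀)⁻).toNat⟩ (fun b hb => hb)
  rw [this, Int.toNat_of_nonneg (negPart_nonneg _)]


lemma finS (D : Function.locallyFinsupp ℂ ℤ) (r : ℝ) :
    ({z : ℂ | ‖z‖ ≤ r ∧ D z ≠ 0}).Finite := by
  have h := (Function.locallyFinsuppWithin.toClosedBall r D).finiteSupport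
    (isCompact_closedBall 0 |r|)
  refine h.subset ?_
  rintro z ⟨hz, hD⟩
  have : z ∈ closedBall (0:ℂ) |r| := by simpa using hz.trans (le_abs_self r)
  simp only [Function.mem_support]
  rwa [Function.locallyFinsuppWithin.toClosedBall_eval_within D this]

lemma logCounting_eq_sum (D : Function.locallyFinsupp ℂ ℤ) {r : ℝ} (hr : 0 ≤ r) :
    Function.locallyFinsuppWithin.logCounting D r =
      ∑ z ∈ (finS D r).toFinset, (D z : ℝ) * Real.log (r * ‖z‖⁻¹) + (D 0) * Real.log r := by
  show ∑ᶠ z, ((Function.locallyFinsuppWithin.toClosedBall r D z : ℤ) : ℝ) * Real.log (r * ‖z‖⁻¹)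
    + (D 0) * Real.log r = _
  congr 1
  rw [finsum_eq_sum_of_support_subset (s := (finS D r).toFinset)]
  · apply Finset.sum_congr rfl
    intro z hz
    simp only [Set.Finite.mem_toFinset, Set.mem_ofPred_eq] at hz
    rw [Function.locallyFinsuppWithin.toClosedBall_eval_within D
      (by simpa using hz.1.trans (le_abs_self r))]
  · intro z hz
    simp only [Function.mem_support] at hz
    have h1 : Function.locallyFinsuppWithin.toClosedBall r D z ≠ 0 := by
      intro h; simp [h] at hz
    have h2 := Function.locallyFinsuppWithin.toClosedBall_support_subset_closedBall D h1
    rw [Function.locallyFinsuppWithin.toClosedBall_eval_within D h2] at h1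
    rw [abs_of_nonneg hr] at h2
    simpa using ⟨by simpa using h2, h1⟩

lemma nevn_eq_sum {f : ℂ → ℂ} (hf : Meromorphic f) {r t : ℝ} (htr : t ≤ r) :
    (nevn f t : ℝ) = ∑ z ∈ (finS ((MeromorphicOn.divisor f Set.univ)⁻) r).toFinset,
      if ‖z‖ ≤ t then (((MeromorphicOn.divisor f Set.univ)⁻ z : ℤ) : ℝ) else 0 := by
  set D := (MeromorphicOn.divisor f Set.univ)⁻ with hD
  unfold nevn
  rw [finsum_mem_eq_sum_of_inter_support_eq (t := (finS D r).toFinset.filter (fun z => ‖z‖ ≤ t))]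
  · rw [Finset.sum_filter, Nat.cast_sum]
    apply Finset.sum_congr rfl
    intro z _
    split_ifs
    · rw [hD, ← poleOrd_eq hf z]; simp
    · simp
  · ext z
    have := poleOrd_eq hf z
    simp only [Set.mem_inter_iff, mem_closedBall, dist_zero_right, Function.mem_support, ne_eq,
      Finset.coe_filter, Set.Finite.mem_toFinset, Set.mem_ofPred_eq]
    constructor
    · rintro ⟨h1, h2⟩
      refine ⟨⟨⟨h1.trans htr, ?_⟩, h1⟩, h2⟩
      rw [hD, ← this]; exact_mod_cast h2
    · rintro ⟨h1, h2⟩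
      exact ⟨h1.2, h2⟩

lemma integral_step {a r : ℝ} (ha : 0 < a) (har : a ≤ r) (C : ℝ) :
    IntervalIntegrable (fun t : ℝ => (if a ≤ t then C else 0) / t) volume 0 r ∧
    ∫ t in (0:ℝ)..r, (if a ≤ t then C else 0) / t = C * Real.log (r * a⁻¹) := by
  have h1 : ∀ᵐ t ∂(volume : Measure ℝ), t ∈ Set.uIoc 0 a → (if a ≤ t then C else 0) / t = 0 := by
    have : ∀ᵐ t ∂(volume : Measure ℝ), t ≠ a := by simp [ae_iff]
    filter_upwards [this] with t ht hmem
    rw [Set.uIoc_of_le ha.le] at hmem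
    have : ¬ a ≤ t := not_le.2 (lt_of_le_of_ne hmem.2 ht)
    simp [this]
  have h2 : ∀ᵐ t ∂(volume : Measure ℝ), t ∈ Set.uIoc a r →
      (if a ≤ t then C else 0) / t = C * t⁻¹ := by
    filter_upwards with t hmem
    rw [Set.uIoc_of_le har] at hmem
    simp [hmem.1.le, div_eq_mul_inv]
  have i1 : IntervalIntegrable (fun t : ℝ => (if a ≤ t then C else 0) / t) volume 0 a := by
    refine (intervalIntegrable_const (c := (0:ℝ))).congr_ae ?_
    refine (ae_restrict_iff' measurableSet_uIoc).2 ?_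
    filter_upwards [h1] with t ht hm using (ht hm).symm
  have i2' : IntervalIntegrable (fun t : ℝ => C * t⁻¹) volume a r := by
    apply IntervalIntegrable.const_mul
    apply intervalIntegral.intervalIntegrable_inv
    · intro x hx
      rw [Set.uIcc_of_le har] at hx
      linarith [hx.1]
    · fun_prop
  have i2 : IntervalIntegrable (fun t : ℝ => (if a ≤ t then C else 0) / t) volume a r := by
    refine i2'.congr_ae ?_
    refine (ae_restrict_iff' measurableSet_uIoc).2 ?_
    filter_upwards [h2] with t ht hm using (ht hm).symm
  refine ⟨i1.trans i2, ?_⟩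
  rw [← intervalIntegral.integral_add_adjacent_intervals i1 i2,
    intervalIntegral.integral_congr_ae h1, intervalIntegral.integral_congr_ae h2]
  simp only [intervalIntegral.integral_zero, intervalIntegral.integral_const_mul, zero_add]
  rw [integral_inv_of_pos ha (ha.trans_le har), div_eq_mul_inv]

lemma nevN_eq {f : ℂ → ℂ} (hf : Meromorphic f) {r : ℝ} (hr : 0 < r) :
    nevN f r = ValueDistribution.logCounting f ⊤ r := by
  rw [ValueDistribution.logCounting_top, logCounting_eq_sum _ hr.le]
  set D := (MeromorphicOn.divisor f Set.univ)⁻ with hD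
  unfold nevN
  have h0 : (nevn f 0 : ℝ) = D 0 := by
    rw [nevn_eq_sum hf hr.le]
    by_cases h : D 0 = 0
    · rw [h, Int.cast_zero]
      apply Finset.sum_eq_zero
      intro z _
      split_ifs with hz
      · have : z = 0 := by simpa using hz
        rw [this]; exact_mod_cast h
      · rfl
    · rw [Finset.sum_eq_single 0]
      · simp [hD]
      · intro z _ hz
        rw [if_neg]; simpa using hz
      · intro h'
        exfalso; apply h'; simp only [Set.Finite.mem_toFinset, Set.mem_ofPred_eq]
        exact ⟨by simpa using hr.le, h⟩
  rw [h0]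
  congr 1
  have hpt : ∀ t ∈ Set.uIcc 0 r, ((nevn f t : ℝ) - D 0) / t =
      ∑ z ∈ (finS D r).toFinset.erase 0, (if ‖z‖ ≤ t then ((D z : ℤ) : ℝ) else 0) / t := by
    intro t ht
    rw [Set.uIcc_of_le hr.le] at ht
    rw [nevn_eq_sum hf ht.2, ← Finset.sum_div]
    congr 1
    by_cases h : (0:ℂ) ∈ (finS D r).toFinset
    · rw [← Finset.add_sum_erase _ _ h]
      simp only [norm_zero, ht.1, if_true, ← hD]
      ring
    · rw [Finset.erase_eq_of_notMem h]
      have : D 0 = 0 := by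
        by_contra h'
        apply h
        simp only [Set.Finite.mem_toFinset, Set.mem_ofPred_eq]
        exact ⟨by simpa using hr.le, h'⟩
      rw [this]; simp [hD]
  rw [intervalIntegral.integral_congr hpt, intervalIntegral.integral_finsetSum]
  · have : ∑ z ∈ (finS D r).toFinset, (D z : ℝ) * Real.log (r * ‖z‖⁻¹) =
        ∑ z ∈ (finS D r).toFinset.erase 0, (D z : ℝ) * Real.log (r * ‖z‖⁻¹) := by
      symm
      apply Finset.sum_erase
      simp
    rw [this]
    apply Finset.sum_congr rfl
    intro z hz
    simp only [Finset.mem_erase, Set.Finite.mem_toFinset, Set.mem_ofPred_eq] at hz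
    exact (integral_step (norm_pos_iff.2 hz.1) hz.2.1 _).2
  · intro z hz
    simp only [Finset.mem_erase, Set.Finite.mem_toFinset, Set.mem_ofPred_eq] at hz
    exact (integral_step (norm_pos_iff.2 hz.1) hz.2.1 _).1

lemma nevT_eq {f : ℂ → ℂ} (hf : Meromorphic f) {r : ℝ} (hr : 0 < r) :
    nevT f r = ValueDistribution.characteristic f ⊤ r := by
  rw [nevT, nevN_eq hf hr, nevm_eq, ValueDistribution.characteristic,
    ValueDistribution.proximity_top]
  rfl


lemma abs_rpow_integrable {α : ℝ} (h1 : α < 1) :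
    IntervalIntegrable (fun x : ℝ => |x| ^ (-α)) volume (-Real.pi) Real.pi := by
  have h : IntervalIntegrable (fun x : ℝ => |x| ^ (-α)) volume 0 Real.pi := by
    refine (intervalIntegral.intervalIntegrable_rpow' (r := -α) (by linarith)).congr_ae ?_
    refine (ae_restrict_iff' measurableSet_uIoc).2 ?_
    filter_upwards with t ht
    rw [Set.uIoc_of_le Real.pi_pos.le] at ht
    rw [abs_of_pos ht.1]
  have h' : IntervalIntegrable (fun x : ℝ => |x| ^ (-α)) volume (-Real.pi) 0 := by
    have := h.comp_sub_left 0
    simp at this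
    exact this.symm
  exact h'.trans h

lemma norm_circle_sub_ge {r : ℝ} (hr : 0 < r) (β : ℝ) (hβ : 0 ≤ β) {x : ℝ}
    (hx : |x| ≤ Real.pi) :
    r * |x| / Real.pi ≤ ‖(r : ℂ) * Complex.exp (x * Complex.I) - β‖ := by
  set w := (r : ℂ) * Complex.exp (x * Complex.I) - β with hw
  have hre : w.re = r * Real.cos x - β := by
    simp [hw, Complex.exp_ofReal_mul_I_re, Complex.exp_ofReal_mul_I_im]
  have him : w.im = r * Real.sin x := by
    simp [hw, Complex.exp_ofReal_mul_I_re, Complex.exp_ofReal_mul_I_im]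
  have hpi := Real.pi_pos
  rcases le_total |x| (Real.pi / 2) with h | h
  · have h1 : 2 / Real.pi * |x| ≤ |Real.sin x| := Real.mul_abs_le_abs_sin h
    have h2 := Complex.abs_im_le_norm w
    rw [him, abs_mul, abs_of_pos hr] at h2
    refine le_trans ?_ h2
    have : r * |x| / Real.pi = r * (1 / Real.pi * |x|) := by ring
    rw [this]
    refine mul_le_mul_of_nonneg_left (le_trans ?_ h1) hr.le
    gcongr; norm_num
  · have hc : Real.cos x ≤ 0 := by
      rw [← Real.cos_abs]
      exact Real.cos_nonpos_of_pi_div_two_le_of_le h (by linarith)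
    have h2 : r ≤ ‖w‖ := by
      rw [← abs_of_pos hr, ← abs_of_nonneg (norm_nonneg w), ← sq_le_sq, Complex.sq_norm,
        Complex.normSq_apply, hre, him]
      nlinarith [Real.sin_sq_add_cos_sq x, mul_nonneg (mul_nonneg hr.le hβ) (neg_nonneg.2 hc)]
    refine le_trans ?_ h2
    rw [div_le_iff₀ hpi]
    gcongr

lemma avg_rpow {α : ℝ} (h0 : 0 < α) (h1 : α < 1) : ∃ C : ℝ, 0 ≤ C ∧ ∀ r : ℝ, 0 < r → ∀ b : ℂ,
    CircleIntegrable (fun z => ‖z - b‖ ^ (-α)) 0 r ∧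
    Real.circleAverage (fun z => ‖z - b‖ ^ (-α)) 0 r ≤ C * r ^ (-α) := by
  have hpi := Real.pi_pos
  set I := ∫ x in (-Real.pi)..Real.pi, |x| ^ (-α) with hI
  have hI0 : 0 ≤ I := by
    apply intervalIntegral.integral_nonneg (by linarith)
    intro x _; positivity
  refine ⟨(2 * Real.pi)⁻¹ * ((Real.pi⁻¹) ^ (-α) * I), by positivity, ?_⟩
  intro r hr b
  set φ := Complex.arg b
  set F : ℝ → ℝ := fun θ => ‖circleMap 0 r θ - b‖ ^ (-α) with hF
  set G : ℝ → ℝ := fun θ => (r / Real.pi) ^ (-α) * |θ - φ| ^ (-α) with hG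
  have hper : Function.Periodic F (2 * Real.pi) := by
    intro θ; simp only [hF, periodic_circleMap 0 r θ]
  have hb : b = (‖b‖ : ℂ) * Complex.exp (φ * Complex.I) := (Complex.norm_mul_exp_arg_mul_I b).symm
  have hFG : ∀ θ ∈ Set.Icc (φ - Real.pi) (φ + Real.pi), θ ≠ φ → F θ ≤ G θ := by
    intro θ hθ hne
    have hpos : 0 < |θ - φ| := abs_pos.2 (sub_ne_zero.2 hne)
    have hle : |θ - φ| ≤ Real.pi := abs_le.2 ⟨by linarith [hθ.1], by linarith [hθ.2]⟩
    have key := norm_circle_sub_ge hr ‖b‖ (norm_nonneg b) hle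
    have e1 : circleMap 0 r θ - b = ((r : ℂ) * Complex.exp (((θ - φ : ℝ) : ℂ) * Complex.I) - (‖b‖ : ℂ)) *
        Complex.exp (φ * Complex.I) := by
      rw [sub_mul, ← hb, mul_assoc, ← Complex.exp_add, circleMap]
      push_cast; ring_nf
    have e2 : ‖circleMap 0 r θ - b‖ =
        ‖(r : ℂ) * Complex.exp (((θ - φ : ℝ) : ℂ) * Complex.I) - (‖b‖ : ℂ)‖ := by
      rw [e1, norm_mul, Complex.norm_exp_ofReal_mul_I, mul_one]
    simp only [hF, hG]
    rw [e2, ← Real.mul_rpow (by positivity) (by positivity)]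
    refine Real.rpow_le_rpow_of_nonpos (by positivity) ?_ (by linarith)
    calc r / Real.pi * |θ - φ| = r * |θ - φ| / Real.pi := by ring
      _ ≤ _ := key
  have hle : φ - Real.pi ≤ φ + Real.pi := by linarith
  have hGi : IntervalIntegrable G volume (φ - Real.pi) (φ + Real.pi) := by
    apply IntervalIntegrable.const_mul
    have := (abs_rpow_integrable h1).comp_sub_right φ
    rwa [neg_add_eq_sub, add_comm] at this
  have hae : ∀ᵐ θ ∂(volume : Measure ℝ), θ ≠ φ := by simp [ae_iff]
  have hFi : IntervalIntegrable F volume (φ - Real.pi) (φ + Real.pi) := by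
    refine hGi.mono_fun ?_ ?_
    · apply Measurable.aestronglyMeasurable
      have : Measurable (fun θ => ‖circleMap 0 r θ - b‖) := by
        apply Continuous.measurable; fun_prop
      exact this.pow_const _
    · refine (ae_restrict_iff' measurableSet_uIoc).2 ?_
      filter_upwards [hae] with θ hθ hm
      rw [Set.uIoc_of_le hle] at hm
      rw [Real.norm_of_nonneg (by positivity), Real.norm_of_nonneg (by positivity)]
      exact hFG θ ⟨hm.1.le, hm.2⟩ hθ
  have hFi' : IntervalIntegrable F volume 0 (2 * Real.pi) := by
    apply hper.intervalIntegrable (t := φ - Real.pi) (by positivity)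
    convert hFi using 1; ring
  refine ⟨hFi', ?_⟩
  rw [Real.circleAverage_def, smul_eq_mul, mul_assoc]
  refine mul_le_mul_of_nonneg_left ?_ (by positivity)
  have e : ∫ θ in (0:ℝ)..(2 * Real.pi), F θ = ∫ θ in (φ - Real.pi)..(φ + Real.pi), F θ := by
    have := hper.intervalIntegral_add_eq 0 (φ - Real.pi)
    rw [zero_add] at this
    rw [this]; congr 1; ring
  change ∫ θ in (0:ℝ)..(2 * Real.pi), F θ ≤ _
  rw [e]
  have hm : ∫ θ in (φ - Real.pi)..(φ + Real.pi), F θ ≤ ∫ θ in (φ - Real.pi)..(φ + Real.pi), G θ := by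
    refine intervalIntegral.integral_mono_ae_restrict hle hFi hGi ?_
    refine (ae_restrict_iff' measurableSet_Icc).2 ?_
    filter_upwards [hae] with θ hθ hm using hFG θ hm hθ
  refine hm.trans (le_of_eq ?_)
  simp only [hG, intervalIntegral.integral_const_mul]
  have : ∫ θ in (φ - Real.pi)..(φ + Real.pi), |θ - φ| ^ (-α) = I := by
    rw [intervalIntegral.integral_comp_sub_right (fun x => |x| ^ (-α)) φ, hI]
    congr 1 <;> ring
  rw [this, div_eq_inv_mul, Real.mul_rpow (by positivity) hr.le]
  ring

lemma log_one_add_le {α w : ℝ} (h0 : 0 < α) (h1 : α ≤ 1) (hw : 0 ≤ w) :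
    Real.log (1 + w) ≤ w ^ α / α := by
  rw [le_div_iff₀ h0, mul_comm, ← Real.log_rpow (by linarith)]
  have h2 : (1 + w) ^ α ≤ 1 + w ^ α := by
    have := Real.rpow_add_le_add_rpow (p := α) zero_le_one hw h0.le h1
    simpa using this
  have h3 : 0 < (1 + w) ^ α := by positivity
  have := Real.log_le_sub_one_of_pos h3
  linarith

lemma abs_log_sub_le {α x y e : ℝ} (h0 : 0 < α) (h1 : α ≤ 1) (hx : 0 < x) (hy : 0 < y)
    (he : |x - y| ≤ e) :
    |Real.log x - Real.log y| ≤ e ^ α / α * (x ^ (-α) + y ^ (-α)) := by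
  have he0 : 0 ≤ e := (abs_nonneg _).trans he
  have key : ∀ x y : ℝ, 0 < x → 0 < y → x - y ≤ e →
      Real.log x - Real.log y ≤ e ^ α / α * y ^ (-α) := by
    intro x y hx hy h
    rw [← Real.log_div hx.ne' hy.ne']
    have h2 : x / y ≤ 1 + e / y := by
      rw [div_le_iff₀ hy, add_mul, div_mul_cancel₀ _ hy.ne']; linarith
    refine (Real.log_le_log (by positivity) h2).trans ((log_one_add_le h0 h1 (by positivity)).trans
      (le_of_eq ?_))
    rw [Real.div_rpow he0 hy.le, Real.rpow_neg hy.le]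
    field_simp
  have hC : 0 ≤ e ^ α / α := by positivity
  have a1 : 0 ≤ e ^ α / α * x ^ (-α) := by positivity
  have a2 : 0 ≤ e ^ α / α * y ^ (-α) := by positivity
  have k1 := key x y hx hy ((le_abs_self _).trans he)
  have k2 := key y x hy hx (by rw [abs_sub_comm] at he; exact (le_abs_self _).trans he)
  rw [abs_le]; constructor <;> nlinarith

lemma poisson_diff {u : ℂ → ℝ} {R d : ℝ} {w w' : ℂ} (hd : 0 < d)
    (hu : InnerProductSpace.HarmonicOnNhd u (closedBall 0 R))
    (hw : ‖w‖ ≤ R - d) (hw' : ‖w'‖ ≤ R - d) :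
    |u w - u w'| ≤ 2 * R * ‖w - w'‖ / d ^ 2 * Real.circleAverage (fun z => |u z|) 0 R := by
  have hR : 0 < R := by linarith [norm_nonneg w]
  have hwb : w ∈ ball (0:ℂ) R := by simp; linarith
  have hwb' : w' ∈ ball (0:ℂ) R := by simp; linarith
  have hucont : ContinuousOn u (closedBall 0 R) := fun z hz =>
    (hu z hz).1.continuousAt.continuousWithinAt
  have hus : ContinuousOn u (sphere 0 R) := hucont.mono sphere_subset_closedBall
  have hui : CircleIntegrable u 0 R := hus.circleIntegrable hR.le
  have hki : ∀ w ∈ ball (0:ℂ) R,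
      CircleIntegrable ((Complex.re ∘ herglotzRieszKernel 0 w) • u) 0 R := by
    intro w hw
    apply ContinuousOn.circleIntegrable hR.le
    apply ContinuousOn.smul _ hus
    exact Complex.continuous_re.comp_continuousOn
      (by simpa [abs_of_pos hR] using continuousOn_herglotzRieszKernel_sphere hw)
  rw [← hu.circleAverage_re_herglotzRieszKernel_smul hwb,
    ← hu.circleAverage_re_herglotzRieszKernel_smul hwb',
    ← Real.circleAverage_sub (hki w hwb) (hki w' hwb')]
  refine Real.abs_circleAverage_le_circleAverage_abs.trans ?_
  rw [← smul_eq_mul, ← Real.circleAverage_fun_smul]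
  apply Real.circleAverage_mono
  · exact ((hki w hwb).sub (hki w' hwb')).abs
  · exact hui.abs.const_smul
  · intro z hz
    rw [abs_of_pos hR] at hz
    have hz' : ‖z‖ = R := by simpa using hz
    have n1 : d ≤ ‖z - w‖ := by have := norm_sub_norm_le z w; linarith
    have n2 : d ≤ ‖z - w'‖ := by have := norm_sub_norm_le z w'; linarith
    have z1 : z - w ≠ 0 := norm_pos_iff.1 (by linarith)
    have z2 : z - w' ≠ 0 := norm_pos_iff.1 (by linarith)
    change |(herglotzRieszKernel 0 w z).re * u z - (herglotzRieszKernel 0 w' z).re * u z|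
      ≤ 2 * R * ‖w - w'‖ / d ^ 2 * |u z|
    rw [← sub_mul, abs_mul]
    gcongr
    rw [← Complex.sub_re]
    refine (Complex.abs_re_le_norm _).trans ?_
    have : herglotzRieszKernel 0 w z - herglotzRieszKernel 0 w' z
        = 2 * z * (w - w') / ((z - w) * (z - w')) := by
      simp only [herglotzRieszKernel_def, sub_zero]
      field_simp; ring
    rw [this, norm_div, norm_mul, norm_mul, norm_mul, hz', sq]
    simp only [Complex.norm_ofNat]
    gcongr


lemma circleAverage_mono_finite {f₁ f₂ : ℂ → ℝ} {r : ℝ} (hr : 0 < r)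
    (h1 : CircleIntegrable f₁ 0 r) (h2 : CircleIntegrable f₂ 0 r) {B : Set ℂ} (hB : B.Finite)
    (h : ∀ z : ℂ, ‖z‖ = r → z ∉ B → f₁ z ≤ f₂ z) :
    Real.circleAverage f₁ 0 r ≤ Real.circleAverage f₂ 0 r := by
  have hc : f₁ =ᶠ[codiscreteWithin (sphere 0 |r|)] fun z => min (f₁ z) (f₂ z) := by
    filter_upwards [compl_finite_mem_codiscreteWithin (s := sphere (0:ℂ) |r|) hB,
      Filter.self_mem_codiscreteWithin (sphere (0:ℂ) |r|)] with z hz hs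
    rw [min_eq_left]
    apply h z _ hz
    simpa [abs_of_pos hr] using hs
  rw [Real.circleAverage_congr_codiscreteWithin hc hr.ne']
  exact Real.circleAverage_mono (h1.congr_codiscreteWithin hc) h2 (fun z _ => min_le_right _ _)

lemma merom_fac {f : ℂ → ℂ} (hf : Meromorphic f) (hord : ∀ z, meromorphicOrderAt f z ≠ ⊤)
    (R : ℝ) : ∃ g : ℂ → ℂ, ∃ B : Set ℂ, B.Finite ∧
      InnerProductSpace.HarmonicOnNhd (fun z => Real.log ‖g z‖) (closedBall 0 R) ∧
      ∀ z : ℂ, ‖z‖ ≤ R → z ∉ B →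
        Real.log ‖f z‖ = ∑ u ∈ (finS (MeromorphicOn.divisor f Set.univ) R).toFinset,
          ((MeromorphicOn.divisor f Set.univ u : ℤ) : ℝ) * Real.log ‖z - u‖ + Real.log ‖g z‖ := by
  have hfU : MeromorphicOn f (closedBall 0 R) := fun z _ => hf z
  obtain ⟨g, hg1, hg2, hg3⟩ := hfU.extract_zeros_poles (fun u => hord u)
    ((MeromorphicOn.divisor f (closedBall 0 R)).finiteSupport (isCompact_closedBall 0 R))
  have h4 := MeromorphicOn.extract_zeros_poles_log hg2 hg3
  have hB := (isCompact_closedBall (0:ℂ) R).finite_sdiff_of_mem_codiscreteWithin h4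
  refine ⟨g, _, hB, fun z hz => (hg1 z hz).harmonicAt_log_norm (hg2 ⟨z, hz⟩), ?_⟩
  intro z hz hzB
  have hz' : z ∈ closedBall (0:ℂ) R := by simpa using hz
  have h5 : Real.log ‖f z‖ = ((∑ᶠ (u : ℂ), fun x => ((MeromorphicOn.divisor f (closedBall 0 R) u : ℤ) : ℝ)
      * Real.log ‖x - u‖) + fun x => Real.log ‖g x‖) z := by
    by_contra hne
    exact hzB ⟨hz', hne⟩
  rw [h5, Pi.add_apply]
  congr 1
  have hdiv : ∀ u ∈ closedBall (0:ℂ) R, MeromorphicOn.divisor f (closedBall 0 R) u =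
      MeromorphicOn.divisor f Set.univ u := by
    intro u hu
    rw [MeromorphicOn.divisor_apply hfU hu,
      MeromorphicOn.divisor_apply (fun z _ => hf z) (Set.mem_univ u)]
  rw [finsum_eq_sum_of_support_subset
    (s := (finS (MeromorphicOn.divisor f Set.univ) R).toFinset), Finset.sum_apply]
  · apply Finset.sum_congr rfl
    intro u hu
    simp only [Set.Finite.mem_toFinset, Set.mem_ofPred_eq] at hu
    rw [hdiv u (by simpa using hu.1)]
  · intro u hu
    have h1 : MeromorphicOn.divisor f (closedBall 0 R) u ≠ 0 := by
      intro h0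
      apply hu
      funext x
      simp [h0]
    have h2 : u ∈ closedBall (0:ℂ) R := by
      by_contra h2
      apply h1
      rw [MeromorphicOn.divisor_def, if_neg (fun h => h2 h.2)]
    rw [hdiv u h2] at h1
    simpa using ⟨by simpa using h2, h1⟩

lemma avg_abs_log_sub {R : ℝ} (hR : 1 ≤ R) {u : ℂ} (hu : ‖u‖ ≤ R) :
    CircleIntegrable (fun z => |Real.log ‖z - u‖|) 0 R ∧
    Real.circleAverage (fun z => |Real.log ‖z - u‖|) 0 R ≤ 2 * Real.log (2 * R) := by
  have hi : CircleIntegrable (fun z => Real.log ‖z - u‖) 0 R :=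
    circleIntegrable_log_norm_sub_const R
  refine ⟨hi.abs, ?_⟩
  have h1 : Real.circleAverage (fun z => |Real.log ‖z - u‖|) 0 R ≤
      Real.circleAverage (fun z => 2 * Real.log (2 * R) - Real.log ‖z - u‖) 0 R := by
    apply Real.circleAverage_mono hi.abs ((circleIntegrable_const _ _ _).sub hi)
    intro z hz
    have hz' : ‖z‖ = R := by simpa [abs_of_pos (by linarith : 0 < R)] using hz
    have hL : 0 ≤ Real.log (2 * R) := Real.log_nonneg (by linarith)
    have hle : Real.log ‖z - u‖ ≤ Real.log (2 * R) := by
      by_cases h : z - u = 0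
      · simp [h, hL]
      · apply Real.log_le_log (norm_pos_iff.2 h)
        linarith [norm_sub_le z u]
    change |Real.log ‖z - u‖| ≤ 2 * Real.log (2 * R) - Real.log ‖z - u‖
    rw [abs_le]; constructor <;> linarith
  refine h1.trans ?_
  rw [Real.circleAverage_fun_sub (circleIntegrable_const _ _ _) hi, Real.circleAverage_const,
    circleAverage_log_norm_sub_const_of_mem_closedBall
      (by simpa [abs_of_pos (by linarith : 0 < R)] using hu)]
  linarith [Real.log_nonneg hR]

lemma main_est {f : ℂ → ℂ} (hf : Meromorphic f) (hord : ∀ z, meromorphicOrderAt f z ≠ ⊤)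
    {α : ℝ} (h0 : 0 < α) (h1 : α < 1) (c h : ℂ) : ∃ C : ℝ, 0 ≤ C ∧ ∀ r R d : ℝ, 0 < r → 1 ≤ R →
      0 < d → r + ‖c‖ ≤ R - d → r + ‖h‖ ≤ R - d →
      Real.circleAverage (fun z => Real.posLog ‖f (z + c) / f (z + h)‖) 0 r ≤
      C * r ^ (-α) * (∑ u ∈ (finS (MeromorphicOn.divisor f Set.univ) R).toFinset,
          |((MeromorphicOn.divisor f Set.univ u : ℤ) : ℝ)|) +
      2 * R * ‖c - h‖ / d ^ 2 * (ValueDistribution.proximity f ⊤ R +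
        ValueDistribution.proximity f⁻¹ ⊤ R +
        (∑ u ∈ (finS (MeromorphicOn.divisor f Set.univ) R).toFinset,
          |((MeromorphicOn.divisor f Set.univ u : ℤ) : ℝ)|) * (2 * Real.log (2 * R))) := by
  obtain ⟨C₁, hC₁, hav⟩ := avg_rpow h0 h1
  set K := ‖c - h‖ ^ α / α with hK
  have hK0 : 0 ≤ K := by positivity
  refine ⟨K * (2 * C₁), by positivity, ?_⟩
  intro r R d hr hR hd hc hh
  set D : ℂ → ℝ := fun u => ((MeromorphicOn.divisor f Set.univ u : ℤ) : ℝ) with hD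
  set S := (finS (MeromorphicOn.divisor f Set.univ) R).toFinset with hS
  have hSn : ∀ u ∈ S, ‖u‖ ≤ R := by
    intro u hu
    simp only [hS, Set.Finite.mem_toFinset, Set.mem_ofPred_eq] at hu
    exact hu.1
  have hR0 : 0 < R := by linarith
  obtain ⟨g, B, hB, hgh, hfac⟩ := merom_fac hf hord R
  -- the harmonic part
  have hgi : CircleIntegrable (fun z => Real.log ‖g z‖) 0 R := by
    apply ContinuousOn.circleIntegrable hR0.le
    intro z hz
    exact (hgh z (sphere_subset_closedBall hz)).1.continuousAt.continuousWithinAt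
  have hG : Real.circleAverage (fun z => |Real.log ‖g z‖|) 0 R ≤
      ValueDistribution.proximity f ⊤ R + ValueDistribution.proximity f⁻¹ ⊤ R +
        (∑ u ∈ S, |D u|) * (2 * Real.log (2 * R)) := by
    have i1 : CircleIntegrable (fun z => Real.posLog ‖f z‖) 0 R :=
      MeromorphicOn.circleIntegrable_posLog_norm (fun z _ => hf z)
    have i2 : CircleIntegrable (fun z => Real.posLog ‖f⁻¹ z‖) 0 R :=
      MeromorphicOn.circleIntegrable_posLog_norm (fun z _ => (hf z).inv)
    have i3 : ∀ u ∈ S, CircleIntegrable (fun z => |D u| * |Real.log ‖z - u‖|) 0 R :=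
      fun u hu => (avg_abs_log_sub hR (hSn u hu)).1.const_smul
    have i3' : CircleIntegrable (fun z => ∑ u ∈ S, |D u| * |Real.log ‖z - u‖|) 0 R :=
      CircleIntegrable.fun_sum _ i3
    have e := circleAverage_mono_finite hR0 hgi.abs ((i1.add i2).add i3') hB (by
      intro z hz hzB
      have := hfac z hz.le hzB
      have e1 : Real.log ‖g z‖ = Real.log ‖f z‖ - ∑ u ∈ S, D u * Real.log ‖z - u‖ := by
        rw [this]; ring
      have e2 : |Real.log ‖f z‖| = Real.posLog ‖f z‖ + Real.posLog ‖f⁻¹ z‖ := by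
        rw [Pi.inv_apply, norm_inv]
        simp only [Real.posLog, Real.log_inv]
        rcases le_total 0 (Real.log ‖f z‖) with hl | hl
        · rw [abs_of_nonneg hl, max_eq_right hl, max_eq_left (by linarith)]; ring
        · rw [abs_of_nonpos hl, max_eq_left hl, max_eq_right (by linarith)]; ring
      simp only [Pi.add_apply, Pi.abs_apply]
      rw [← e2, e1]
      refine (abs_sub _ _).trans ?_
      gcongr
      refine (Finset.abs_sum_le_sum_abs _ _).trans (le_of_eq ?_)
      simp only [abs_mul])
    refine le_trans e ?_
    rw [Real.circleAverage_add (i1.add i2) i3', Real.circleAverage_add i1 i2,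
      Real.circleAverage_fun_sum i3, ValueDistribution.proximity_top,
      ValueDistribution.proximity_top, Finset.sum_mul]
    gcongr with u hu
    have := Real.circleAverage_fun_smul (a := |D u|) (f := fun z => |Real.log ‖z - u‖|) (c := 0)
      (R := R)
    simp only [smul_eq_mul] at this
    rw [this]
    gcongr
    exact (avg_abs_log_sub hR (hSn u hu)).2
  set M := ValueDistribution.proximity f ⊤ R + ValueDistribution.proximity f⁻¹ ⊤ R +
        (∑ u ∈ S, |D u|) * (2 * Real.log (2 * R)) with hM
  have hP : ∀ z : ℂ, ‖z‖ = r → |Real.log ‖g (z + c)‖ - Real.log ‖g (z + h)‖| ≤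
      2 * R * ‖c - h‖ / d ^ 2 * M := by
    intro z hz
    have b1 := norm_add_le z c
    have b2 := norm_add_le z h
    have := poisson_diff (w := z + c) (w' := z + h) hd hgh (by linarith) (by linarith)
    rw [add_sub_add_left_eq_sub] at this
    refine this.trans ?_
    gcongr
  -- the main comparison
  have j1 : CircleIntegrable (fun z => Real.posLog ‖f (z + c) / f (z + h)‖) 0 r := by
    apply MeromorphicOn.circleIntegrable_posLog_norm
    intro z _
    have m1 : ∀ a : ℂ, MeromorphicAt (fun z => f (z + a)) z := fun a =>
      MeromorphicAt.comp_analyticAt (f := f) (g := fun z => z + a) (hf (z + a)) (by fun_prop)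
    exact (m1 c).fun_div (m1 h)
  have j2 : ∀ u ∈ S, CircleIntegrable (fun z => |D u| * K * (‖z - (u - c)‖ ^ (-α) +
      ‖z - (u - h)‖ ^ (-α))) 0 r := fun u hu =>
    ((hav r hr (u - c)).1.add (hav r hr (u - h)).1).const_smul
  have j2' : CircleIntegrable (fun z => ∑ u ∈ S, |D u| * K * (‖z - (u - c)‖ ^ (-α) +
      ‖z - (u - h)‖ ^ (-α))) 0 r := CircleIntegrable.fun_sum _ j2
  have hB1 : ((fun z => z + c) ⁻¹' (B ∪ S)).Finite :=
    (hB.union S.finite_toSet).preimage (fun a _ b _ hab => add_right_cancel hab)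
  have hB2 : ((fun z => z + h) ⁻¹' (B ∪ S)).Finite :=
    (hB.union S.finite_toSet).preimage (fun a _ b _ hab => add_right_cancel hab)
  have e := circleAverage_mono_finite hr j1 (j2'.add (circleIntegrable_const
    (2 * R * ‖c - h‖ / d ^ 2 * M) 0 r)) (hB1.union hB2) (by
      intro z hz hzB
      simp only [Set.mem_union, Set.mem_preimage, Finset.mem_coe, not_or] at hzB
      obtain ⟨⟨c1, c2⟩, c3, c4⟩ := hzB
      have b1 := norm_add_le z c
      have b2 := norm_add_le z h
      have f1 := hfac (z + c) (by linarith) c1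
      have f2 := hfac (z + h) (by linarith) c3
      have p : Real.posLog ‖f (z + c) / f (z + h)‖ ≤
          |Real.log ‖f (z + c)‖ - Real.log ‖f (z + h)‖| := by
        by_cases n1 : f (z + c) = 0
        · simp [n1, Real.posLog]
        by_cases n2 : f (z + h) = 0
        · simp [n2, Real.posLog]
        rw [norm_div, Real.posLog, Real.log_div (norm_ne_zero_iff.2 n1) (norm_ne_zero_iff.2 n2)]
        exact max_le (abs_nonneg _) (le_abs_self _)
      refine p.trans ?_
      rw [f1, f2, add_sub_add_comm, ← Finset.sum_sub_distrib]
      refine (abs_add_le _ _).trans ?_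
      simp only [Pi.add_apply]
      refine add_le_add ?_ (hP z hz)
      refine (Finset.abs_sum_le_sum_abs _ _).trans ?_
      apply Finset.sum_le_sum
      intro u hu
      rw [← mul_sub, abs_mul, mul_assoc]
      refine mul_le_mul_of_nonneg_left ?_ (abs_nonneg _)
      have q1 : z - (u - c) = z + c - u := by ring
      have q2 : z - (u - h) = z + h - u := by ring
      rw [q1, q2]
      refine abs_log_sub_le h0 h1.le ?_ ?_ ?_
      · rw [norm_pos_iff, sub_ne_zero]; rintro rfl; exact c2 hu
      · rw [norm_pos_iff, sub_ne_zero]; rintro rfl; exact c4 hu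
      · refine (abs_norm_sub_norm_le _ _).trans (le_of_eq ?_)
        congr 1; ring)
  refine e.trans ?_
  rw [Real.circleAverage_add j2' (circleIntegrable_const _ _ _), Real.circleAverage_const,
    Real.circleAverage_fun_sum j2]
  gcongr
  rw [Finset.mul_sum]
  apply Finset.sum_le_sum
  intro u hu
  have := Real.circleAverage_fun_smul (a := |D u| * K) (f := fun z => ‖z - (u - c)‖ ^ (-α) +
      ‖z - (u - h)‖ ^ (-α)) (c := 0) (R := r)
  simp only [smul_eq_mul] at this
  rw [this, Real.circleAverage_fun_add (hav r hr (u - c)).1 (hav r hr (u - h)).1]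
  have s1 := (hav r hr (u - c)).2
  have s2 := (hav r hr (u - h)).2
  calc |D u| * K * (_ + _) ≤ |D u| * K * (C₁ * r ^ (-α) + C₁ * r ^ (-α)) := by gcongr
    _ = _ := by simp only [hD]; ring


lemma n_bound (f : ℂ → ℂ) {R R' : ℝ} (hR : 1 ≤ R) (hRR : R < R') :
    (∑ u ∈ (finS (MeromorphicOn.divisor f Set.univ) R).toFinset,
          |((MeromorphicOn.divisor f Set.univ u : ℤ) : ℝ)|) * Real.log (R' / R) ≤
    ValueDistribution.logCounting f ⊤ R' + ValueDistribution.logCounting f⁻¹ ⊤ R' := by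
  set D := MeromorphicOn.divisor f (Set.univ : Set ℂ) with hD
  have hR0 : 0 < R := by linarith
  have hR'0 : 0 < R' := by linarith
  have hl : Real.log (R' / R) = Real.log R' - Real.log R :=
    Real.log_div hR'0.ne' hR0.ne'
  have hL : 0 ≤ Real.log (R' / R) := Real.log_nonneg (by rw [le_div_iff₀ hR0]; linarith)
  rw [ValueDistribution.logCounting_inv, ValueDistribution.logCounting_top,
    ValueDistribution.logCounting_zero, ← hD, ← Pi.add_apply, ← map_add,
    logCounting_eq_sum _ hR'0.le]
  have hDD : ∀ u, (((D⁻ + D⁺) u : ℤ) : ℝ) = |((D u : ℤ) : ℝ)| := by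
    intro u
    have h1 : (D⁻ + D⁺) u = |D u| := by
      rw [← posPart_add_negPart, add_comm D⁻]; rfl
    rw [h1, Int.cast_abs]
  simp only [hDD]
  have hnn : ∀ u ∈ (finS (D⁻ + D⁺) R').toFinset, 0 ≤ |((D u : ℤ) : ℝ)| * Real.log (R' * ‖u‖⁻¹) := by
    intro u hu
    simp only [Set.Finite.mem_toFinset, Set.mem_ofPred_eq] at hu
    apply mul_nonneg (abs_nonneg _)
    by_cases h : ‖u‖ = 0
    · simp [h]
    · apply Real.log_nonneg
      rw [← div_eq_mul_inv, le_div_iff₀ (by positivity)]; linarith [hu.1]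
  have hsub : (finS D R).toFinset ⊆ (finS (D⁻ + D⁺) R').toFinset := by
    intro u hu
    simp only [Set.Finite.mem_toFinset, Set.mem_ofPred_eq] at hu ⊢
    refine ⟨hu.1.trans hRR.le, ?_⟩
    intro h0
    have := hDD u
    rw [h0] at this
    have h2 : ((D u : ℤ) : ℝ) = 0 := by
      rw [← abs_eq_zero, ← this]; simp
    exact hu.2 (by exact_mod_cast h2)
  have hterm : ∀ u ∈ (finS D R).toFinset, u ≠ 0 → |((D u : ℤ) : ℝ)| * Real.log (R' / R) ≤
      |((D u : ℤ) : ℝ)| * Real.log (R' * ‖u‖⁻¹) := by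
    intro u hu h0
    simp only [Set.Finite.mem_toFinset, Set.mem_ofPred_eq] at hu
    have : 0 < ‖u‖ := norm_pos_iff.2 h0
    rw [← div_eq_mul_inv]
    gcongr
    exact hu.1
  have hlogR : 0 ≤ Real.log R := Real.log_nonneg hR
  calc _ = ∑ u ∈ (finS D R).toFinset, |((D u : ℤ) : ℝ)| * Real.log (R' / R) := Finset.sum_mul _ _ _
    _ ≤ ∑ u ∈ (finS D R).toFinset, (|((D u : ℤ) : ℝ)| * Real.log (R' * ‖u‖⁻¹) +
          if u = 0 then |((D 0 : ℤ) : ℝ)| * Real.log R' else 0) := by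
        apply Finset.sum_le_sum
        intro u hu
        by_cases h : u = 0
        · subst h
          simp only [norm_zero, inv_zero, mul_zero, Real.log_zero, zero_add, if_true]
          exact mul_le_mul_of_nonneg_left (by linarith) (abs_nonneg _)
        · simp only [h, if_false, add_zero]
          exact hterm u hu h
    _ ≤ _ := by
        rw [Finset.sum_add_distrib]
        gcongr ?_ + ?_
        · exact Finset.sum_le_sum_of_subset_of_nonneg hsub (fun u hu _ => hnn u hu)
        · rw [Finset.sum_ite_eq']
          split_ifs
          · exact le_rfl
          · exact mul_nonneg (abs_nonneg _) (by linarith)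

lemma est2 {f : ℂ → ℂ} (hf : Meromorphic f) (hord : ∀ z, meromorphicOrderAt f z ≠ ⊤)
    {α : ℝ} (h0 : 0 < α) (h1 : α < 1) (c h : ℂ) : ∃ C C₀ : ℝ, 0 ≤ C ∧ 0 ≤ C₀ ∧
      ∀ r R R' d : ℝ, 0 < r → 1 ≤ R → R < R' →
      0 < d → r + ‖c‖ ≤ R - d → r + ‖h‖ ≤ R - d →
      Real.circleAverage (fun z => Real.posLog ‖f (z + c) / f (z + h)‖) 0 r ≤
      (C * r ^ (-α) / Real.log (R' / R) + C * R / d ^ 2 * (1 + 2 * Real.log (2 * R) / Real.log (R' / R)))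
        * (2 * ValueDistribution.characteristic f ⊤ R' + C₀) := by
  obtain ⟨C, hC, H⟩ := main_est hf hord h0 h1 c h
  refine ⟨max C (2 * ‖c - h‖), max |Real.log ‖f 0‖| |Real.log ‖meromorphicTrailingCoeffAt f 0‖|,
    le_max_of_le_left hC, le_max_of_le_left (abs_nonneg _), ?_⟩
  intro r R R' d hr hR hRR hd hc hh
  have hR0 : 0 < R := by linarith
  have hL : 0 < Real.log (R' / R) := Real.log_pos (by rw [lt_div_iff₀ hR0]; linarith)
  have H1 := H r R d hr hR hd hc hh
  have H2 := n_bound f hR hRR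
  set n := ∑ u ∈ (finS (MeromorphicOn.divisor f Set.univ) R).toFinset,
          |((MeromorphicOn.divisor f Set.univ u : ℤ) : ℝ)|
  set C₀ := max |Real.log ‖f 0‖| |Real.log ‖meromorphicTrailingCoeffAt f 0‖|
  have t1 := (abs_le.1 (ValueDistribution.characteristic_sub_characteristic_inv_le (R := R) hf)).1
  have t2 := (abs_le.1 (ValueDistribution.characteristic_sub_characteristic_inv_le (R := R') hf)).1
  have mono := ValueDistribution.characteristic_monotoneOn hf (Set.mem_Ioi.2 hR0)
    (Set.mem_Ioi.2 (hR0.trans hRR)) hRR.le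
  have e : ∀ (g : ℂ → ℂ) s, ValueDistribution.characteristic g ⊤ s =
    ValueDistribution.proximity g ⊤ s + ValueDistribution.logCounting g ⊤ s := fun _ _ => rfl
  have p1 := ValueDistribution.proximity_nonneg (f := f) (a := ⊤) R'
  have p2 := ValueDistribution.proximity_nonneg (f := f⁻¹) (a := ⊤) R'
  have q1 := ValueDistribution.logCounting_nonneg (f := f) (e := ⊤) hR
  have q2 := ValueDistribution.logCounting_nonneg (f := f⁻¹) (e := ⊤) hR
  simp only [Pi.zero_apply] at p1 p2
  set Q := 2 * ValueDistribution.characteristic f ⊤ R' + C₀ with hQ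
  have a1 : ValueDistribution.proximity f ⊤ R + ValueDistribution.proximity f⁻¹ ⊤ R ≤ Q := by
    have := e f R; have := e f⁻¹ R
    linarith
  have a2 : n ≤ Q / Real.log (R' / R) := by
    rw [le_div_iff₀ hL]
    have := e f R'; have := e f⁻¹ R'
    linarith
  have hn0 : 0 ≤ n := Finset.sum_nonneg (fun _ _ => abs_nonneg _)
  have hl2 : 0 ≤ Real.log (2 * R) := Real.log_nonneg (by linarith)
  have hQ0 : 0 ≤ Q := by
    have : 0 ≤ Q / Real.log (R' / R) := hn0.trans a2
    rwa [le_div_iff₀ hL, zero_mul] at this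
  refine H1.trans ?_
  calc _ ≤ max C (2 * ‖c - h‖) * r ^ (-α) * (Q / Real.log (R' / R)) +
        max C (2 * ‖c - h‖) * R / d ^ 2 * (Q + Q / Real.log (R' / R) * (2 * Real.log (2 * R))) := by
        have m1 := le_max_left C (2 * ‖c - h‖)
        have m2 := le_max_right C (2 * ‖c - h‖)
        have : 2 * R * ‖c - h‖ ≤ max C (2 * ‖c - h‖) * R := by nlinarith
        have hp : 0 ≤ max C (2 * ‖c - h‖) := hC.trans m1
        have p3 := ValueDistribution.proximity_nonneg (f := f) (a := ⊤) R
        have p4 := ValueDistribution.proximity_nonneg (f := f⁻¹) (a := ⊤) R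
        simp only [Pi.zero_apply] at p3 p4
        gcongr
    _ = _ := by ring


lemma summ_incr (w : ℕ → ℝ) (hm : Monotone w) (h0 : w 0 = 0) (B : ℝ)
    (hB : ∀ j : ℕ, w j ≤ B * ((j:ℝ) + 1) ^ (1/2 : ℝ)) :
    Summable (fun j : ℕ => (w (j+1) - w j) / ((j:ℝ) + 1)) := by
  have hw0 : ∀ j, 0 ≤ w j := fun j => h0 ▸ hm (Nat.zero_le j)
  have hB0 : 0 ≤ B := by have := hB 0; simpa [h0] using this
  have key : ∀ n : ℕ, ∑ j ∈ Finset.range n, (w (j+1) - w j) / ((j:ℝ) + 1) =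
      w n / ((n:ℝ) + 1) + ∑ j ∈ Finset.range n, w (j+1) / (((j:ℝ) + 1) * ((j:ℝ) + 2)) := by
    intro n
    induction n with
    | zero => simp [h0]
    | succ n ih =>
      rw [Finset.sum_range_succ, Finset.sum_range_succ, ih]
      push_cast
      have : (n:ℝ) + 1 ≠ 0 := by positivity
      have : (n:ℝ) + 2 ≠ 0 := by positivity
      have : (n:ℝ) + 1 + 1 ≠ 0 := by positivity
      field_simp
      ring
  have hs : Summable (fun j : ℕ => B * (((j + 1 : ℕ):ℝ)) ^ (-(3/2) : ℝ) * 2) := by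
    have h1 : Summable (fun j : ℕ => (j:ℝ) ^ (-(3/2) : ℝ)) := Real.summable_nat_rpow.2 (by norm_num)
    exact (((summable_nat_add_iff 1).2 h1).mul_left B).mul_right 2
  have hterm : ∀ j : ℕ, w (j+1) / (((j:ℝ) + 1) * ((j:ℝ) + 2)) ≤
      B * (((j + 1 : ℕ):ℝ)) ^ (-(3/2) : ℝ) * 2 := by
    intro j
    have hx : 0 < (j:ℝ) + 1 := by positivity
    have h1 := hB (j+1)
    push_cast at h1 ⊢
    have h2 : ((j:ℝ) + 1 + 1) ^ (1/2 : ℝ) ≤ 2 * ((j:ℝ) + 1) ^ (1/2 : ℝ) := by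
      calc ((j:ℝ) + 1 + 1) ^ (1/2 : ℝ) ≤ (4 * ((j:ℝ) + 1)) ^ (1/2 : ℝ) := by
            gcongr; linarith
        _ = 2 * ((j:ℝ) + 1) ^ (1/2 : ℝ) := by
            rw [Real.mul_rpow (by norm_num) hx.le]
            congr 1
            rw [← Real.sqrt_eq_rpow]
            rw [show (4:ℝ) = 2 ^ 2 by norm_num]; simp
    have h3 : ((j:ℝ) + 1) ^ (-(3/2) : ℝ) = ((j:ℝ) + 1) ^ (1/2 : ℝ) / ((j:ℝ) + 1) ^ 2 := by
      rw [eq_div_iff (by positivity), ← Real.rpow_natCast, ← Real.rpow_add hx]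
      norm_num
    calc w (j+1) / (((j:ℝ) + 1) * ((j:ℝ) + 2)) ≤
        B * (2 * ((j:ℝ) + 1) ^ (1/2 : ℝ)) / (((j:ℝ) + 1) * ((j:ℝ) + 1)) := by
          gcongr
          · exact h1.trans (by gcongr)
          · norm_num
      _ = _ := by rw [h3]; ring
  refine summable_of_sum_range_le (c := B + ∑' j : ℕ, B * (((j + 1 : ℕ):ℝ)) ^ (-(3/2) : ℝ) * 2)
    ?_ ?_
  · intro j
    exact div_nonneg (sub_nonneg.2 (hm (Nat.le_succ j))) (by positivity)
  · intro n
    rw [key]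
    gcongr
    · rw [div_le_iff₀ (by positivity)]
      refine (hB n).trans ?_
      gcongr
      have : ((n:ℝ) + 1) ^ (1/2 : ℝ) ≤ ((n:ℝ) + 1) ^ (1 : ℝ) :=
        Real.rpow_le_rpow_of_exponent_le (by linarith [Nat.cast_nonneg (α := ℝ) n]) (by norm_num)
      simpa using this
    · refine (Finset.sum_le_sum (fun j _ => hterm j)).trans ?_
      exact hs.sum_le_tsum _ (fun j _ => by positivity)

lemma summ_bad (u : ℕ → ℝ) (hm : Monotone u) (h0 : 0 < u 0) (B : ℝ)
    (hB : ∀ j : ℕ, Real.log (u j) ≤ B * ((j:ℝ) + 1) ^ (1/2 : ℝ)) :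
    Summable (Set.indicator {j : ℕ | 2 * u j < u (j + 3)} (fun j : ℕ => 1 / ((j:ℝ) + 1))) := by
  have hu : ∀ j, 0 < u j := fun j => h0.trans_le (hm (Nat.zero_le j))
  set w : ℕ → ℝ := fun j => Real.log (u j) - Real.log (u 0) with hw
  have hwm : Monotone w := by
    intro i j hij
    have := Real.log_le_log (hu i) (hm hij)
    simp only [hw]; linarith
  have hs := summ_incr w hwm (by simp [hw]) (B + |Real.log (u 0)|) (by
    intro j
    have h1 := hB j
    have h2 : 1 ≤ ((j:ℝ) + 1) ^ (1/2 : ℝ) :=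
      Real.one_le_rpow (by linarith [Nat.cast_nonneg (α := ℝ) j]) (by norm_num)
    have h3 := neg_abs_le (Real.log (u 0))
    have h4 := abs_nonneg (Real.log (u 0))
    simp only [hw]; nlinarith)
  set x : ℕ → ℝ := fun j : ℕ => (w (j+1) - w j) / ((j:ℝ) + 1) with hx
  have hS : Summable (fun j => 3 / Real.log 2 * (x j + x (j + 1) + x (j + 2))) :=
    ((hs.add ((summable_nat_add_iff 1).2 hs)).add ((summable_nat_add_iff 2).2 hs)).mul_left _
  have hl2 : 0 < Real.log 2 := Real.log_pos (by norm_num)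
  have hx0 : ∀ j, 0 ≤ x j := fun j =>
    div_nonneg (sub_nonneg.2 (hwm (Nat.le_succ j))) (by positivity)
  have hxle : ∀ (j i : ℕ), i ≤ 2 → w (j+i+1) - w (j+i) ≤ 3 * ((j:ℝ)+1) * x (j+i) := by
    intro j i hi
    have e : w (j+i+1) - w (j+i) = (((j+i:ℕ):ℝ)+1) * x (j+i) := by
      simp only [hx]; field_simp
    rw [e]
    apply mul_le_mul_of_nonneg_right _ (hx0 _)
    have : (i:ℝ) ≤ 2 := by exact_mod_cast hi
    push_cast
    have := Nat.cast_nonneg (α := ℝ) j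
    linarith
  refine Summable.of_nonneg_of_le (fun j => Set.indicator_nonneg (fun i _ => by positivity) j)
    (fun j => ?_) hS
  by_cases hj : j ∈ {j : ℕ | 2 * u j < u (j + 3)}
  · rw [Set.indicator_of_mem hj]
    have h1 : Real.log 2 ≤ w (j+3) - w j := by
      have h2 : 2 * u j < u (j+3) := hj
      have := Real.log_le_log (by linarith [hu j]) h2.le
      rw [Real.log_mul (by norm_num) (hu j).ne'] at this
      simp only [hw]; linarith
    have a0 := hxle j 0 (by norm_num)
    have a1 := hxle j 1 (by norm_num)
    have a2 := hxle j 2 (by norm_num)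
    simp only [add_zero] at a0
    have hj1 : 0 < (j:ℝ) + 1 := by positivity
    rw [div_le_iff₀ hj1, div_mul_eq_mul_div, div_mul_eq_mul_div, le_div_iff₀ hl2]
    have e1 : j + 1 + 1 = j + 2 := rfl
    have e2 : j + 2 + 1 = j + 3 := rfl
    rw [e1] at a1; rw [e2] at a2
    nlinarith
  · rw [Set.indicator_of_notMem hj]
    have := hx0 j; have := hx0 (j+1); have := hx0 (j+2)
    positivity

lemma one_add_pow_le (p : ℕ) {x : ℝ} (h0 : 0 ≤ x) (h1 : x ≤ 1) : (1 + x) ^ p ≤ 1 + (2 ^ p - 1) * x := by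
  induction p with
  | zero => simp
  | succ p ih =>
    have h2 : (1:ℝ) ≤ 2 ^ p := one_le_pow₀ (by norm_num)
    rw [pow_succ, pow_succ]
    have h3 : (1 + x) ^ p * (1 + x) ≤ (1 + (2 ^ p - 1) * x) * (1 + x) := by gcongr
    have h4 : 0 ≤ (2 ^ p - 1) * (x * (1 - x)) := by
      apply mul_nonneg (by linarith) (mul_nonneg h0 (by linarith))
    nlinarith

lemma finlog_union (S : Set ℕ) (k₀ p : ℕ) (hk : 1 ≤ k₀)
    (hS : Summable (S.indicator (fun j : ℕ => 1 / ((j:ℝ) + 1)))) :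
    FinLogMeasure (⋃ j ∈ S, Set.Icc (((k₀ + j : ℕ):ℝ) ^ p) (((k₀ + j + 1 : ℕ):ℝ) ^ p)) := by
  have hpos : ∀ j : ℕ, (0:ℝ) < ((k₀ + j : ℕ):ℝ) := fun j => by
    have : 0 < k₀ + j := by omega
    exact_mod_cast this
  constructor
  · intro r hr
    simp only [Set.mem_iUnion] at hr
    obtain ⟨j, _, hj⟩ := hr
    exact lt_of_lt_of_le (pow_pos (hpos j) p) hj.1
  · have hone : ∀ j : ℕ, ∫⁻ r in (⋃ (_ : j ∈ S), Set.Icc (((k₀ + j : ℕ):ℝ) ^ p) (((k₀ + j + 1 : ℕ):ℝ) ^ p)),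
        ENNReal.ofReal r⁻¹ ≤ ENNReal.ofReal (2 ^ p * S.indicator (fun j : ℕ => 1 / ((j:ℝ) + 1)) j) := by
      intro j
      by_cases hj : j ∈ S
      · simp only [hj, Set.iUnion_true, Set.indicator_of_mem]
        set a := ((k₀ + j : ℕ):ℝ) with ha
        have hapos : 0 < a := hpos j
        have hb : ((k₀ + j + 1 : ℕ):ℝ) = a + 1 := by push_cast [ha]; ring
        rw [hb]
        calc _ ≤ ∫⁻ r in Set.Icc (a ^ p) ((a+1) ^ p), ENNReal.ofReal (a ^ p)⁻¹ := by
              apply setLIntegral_mono measurable_const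
              intro r hr
              apply ENNReal.ofReal_le_ofReal
              have : 0 < a ^ p := by positivity
              exact inv_anti₀ this hr.1
          _ = ENNReal.ofReal ((a ^ p)⁻¹ * ((a+1)^p - a^p)) := by
              rw [setLIntegral_const, Real.volume_Icc, ENNReal.ofReal_mul (by positivity)]
          _ ≤ _ := by
              apply ENNReal.ofReal_le_ofReal
              have haj : (j:ℝ) + 1 ≤ a := by
                rw [ha]; push_cast
                have : (1:ℝ) ≤ k₀ := by exact_mod_cast hk
                linarith
              have hj0 := Nat.cast_nonneg (α := ℝ) j
              have e : (a ^ p)⁻¹ * ((a+1)^p - a^p) = (1 + 1/a) ^ p - 1 := by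
                rw [show 1 + 1/a = (a+1)/a by field_simp, div_pow]
                have : a ^ p ≠ 0 := by positivity
                field_simp
              rw [e]
              have h1 : 1 / a ≤ 1 := by rw [div_le_one hapos]; linarith
              have := one_add_pow_le p (x := 1/a) (by positivity) h1
              have h2 : 1 / a ≤ 1 / ((j:ℝ)+1) := by gcongr
              have h3 : (0:ℝ) < 2 ^ p := by positivity
              have h4 : (0:ℝ) < 1 / a := by positivity
              nlinarith
      · simp [hj]
    calc _ ≤ ∑' j : ℕ, ∫⁻ r in (⋃ (_ : j ∈ S), Set.Icc (((k₀ + j : ℕ):ℝ) ^ p) (((k₀ + j + 1 : ℕ):ℝ) ^ p)),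
        ENNReal.ofReal r⁻¹ := lintegral_iUnion_le _ _
      _ ≤ ∑' j : ℕ, ENNReal.ofReal (2 ^ p * S.indicator (fun j : ℕ => 1 / ((j:ℝ) + 1)) j) :=
        ENNReal.tsum_le_tsum hone
      _ < ⊤ := by
        rw [← ENNReal.ofReal_tsum_of_nonneg _ (hS.mul_left _)]
        · exact ENNReal.ofReal_lt_top
        · intro j
          exact mul_nonneg (by positivity) (Set.indicator_nonneg (fun i _ => by positivity) j)


lemma log_growth (T : ℝ → ℝ) (hm : MonotoneOn T (Set.Ioi 0)) (k₀ p : ℕ) (hk : 1 ≤ k₀) (hp : 1 ≤ p)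
    (hpos : 0 < T ((k₀:ℝ) ^ p))
    (hord : IsBoundedUnder (· ≤ ·) atTop fun r : ℝ => Real.log (T r) / Real.log r) :
    ∃ B : ℝ, ∀ j : ℕ, Real.log (T (((k₀ + j : ℕ) : ℝ) ^ p)) ≤ B * ((j:ℝ) + 1) ^ (1/2 : ℝ) := by
  obtain ⟨ρ, hρ⟩ := hord
  rw [eventually_map, eventually_atTop] at hρ
  obtain ⟨r₁, hr₁⟩ := hρ
  obtain ⟨N, hN⟩ := exists_nat_ge (max r₁ 2)
  refine ⟨|ρ| * p * (Real.log (k₀ + N + 1) + 2), fun j => ?_⟩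
  have hk' : (1:ℝ) ≤ k₀ := by exact_mod_cast hk
  have hj0 := Nat.cast_nonneg (α := ℝ) j
  have hN2 : (2:ℝ) ≤ N := (le_max_right _ _).trans hN
  have hN1 : r₁ ≤ N := (le_max_left _ _).trans hN
  have hlow : (N:ℝ) ≤ ((k₀ + (j + N) : ℕ):ℝ) ^ p := by
    have h1 : (N:ℝ) ≤ ((k₀ + (j + N) : ℕ):ℝ) := by push_cast; linarith
    exact h1.trans (le_self_pow₀ (by linarith) (by omega))
  have hge : T ((k₀:ℝ) ^ p) ≤ T (((k₀ + j : ℕ) : ℝ) ^ p) := by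
    apply hm (Set.mem_Ioi.2 (by positivity)) (Set.mem_Ioi.2 (by push_cast; positivity))
    push_cast; gcongr; linarith
  have hge2 : T (((k₀ + j : ℕ) : ℝ) ^ p) ≤ T (((k₀ + (j + N) : ℕ) : ℝ) ^ p) := by
    apply hm (Set.mem_Ioi.2 (by push_cast; positivity)) (Set.mem_Ioi.2 (by push_cast; positivity))
    push_cast; gcongr; linarith
  have h1 := Real.log_le_log (hpos.trans_le hge) hge2
  have h2 := hr₁ _ (hN1.trans hlow)
  have hlogpos : 0 < Real.log (((k₀ + (j + N) : ℕ) : ℝ) ^ p) := Real.log_pos (by linarith)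
  beta_reduce at h2
  rw [div_le_iff₀ hlogpos] at h2
  have h3 : Real.log (((k₀ + (j + N) : ℕ) : ℝ) ^ p) ≤ p * (Real.log (k₀ + N + 1) + Real.log (j + 1)) := by
    rw [Real.log_pow, ← Real.log_mul (by positivity) (by positivity)]
    gcongr
    push_cast; nlinarith
  have h4 := Real.log_le_rpow_div (x := (j:ℝ) + 1) (by positivity) (ε := 1/2) (by norm_num)
  have h5 : 1 ≤ ((j:ℝ) + 1) ^ (1/2 : ℝ) := Real.one_le_rpow (by linarith) (by norm_num)
  have h6 : 0 ≤ Real.log ((k₀:ℝ) + N + 1) := Real.log_nonneg (by linarith)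
  have h7 : Real.log (k₀ + N + 1) + Real.log (j + 1) ≤
      (Real.log (k₀ + N + 1) + 2) * ((j:ℝ) + 1) ^ (1/2 : ℝ) := by
    have : ((j:ℝ) + 1) ^ (1/2 : ℝ) / (1/2) = 2 * ((j:ℝ) + 1) ^ (1/2 : ℝ) := by ring
    nlinarith
  calc _ ≤ ρ * Real.log (((k₀ + (j + N) : ℕ) : ℝ) ^ p) := h1.trans h2
    _ ≤ |ρ| * (p * ((Real.log (k₀ + N + 1) + 2) * ((j:ℝ) + 1) ^ (1/2 : ℝ))) := by
      apply mul_le_mul (le_abs_self _) (h3.trans (by gcongr)) hlogpos.le (abs_nonneg _)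
    _ = _ := by ring

lemma step_ineq {q : ℕ} {κ K : ℝ} (hκ : 1 ≤ κ) (hKκ : K ≤ κ) :
    (κ + 1) ^ (q + 3) + K ≤ (κ + 2) ^ (q + 3) - κ ^ (q + 2) := by
  have h1 : (κ + 2) ^ (q + 3) = (κ + 1) * (κ + 2) ^ (q + 2) + (κ + 2) ^ (q + 2) := by ring
  have h2 : (κ + 1) ^ (q + 3) = (κ + 1) * (κ + 1) ^ (q + 2) := by ring
  have h3 : (κ + 1) ^ (q + 2) ≤ (κ + 2) ^ (q + 2) := by gcongr; norm_num
  have h4 : (κ + 2) ^ (q + 2) = κ * (κ + 2) ^ (q + 1) + 2 * (κ + 2) ^ (q + 1) := by ring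
  have h5 : κ ^ (q + 2) = κ * κ ^ (q + 1) := by ring
  have h6 : κ ^ (q + 1) ≤ (κ + 2) ^ (q + 1) := by gcongr; norm_num
  have h7 : κ ≤ κ ^ (q + 1) := le_self_pow₀ hκ (by omega)
  nlinarith

lemma coeff_bound {C α κ r : ℝ} {q : ℕ} (hC : 0 ≤ C) (h0 : 0 < α) (hκ : 1 ≤ κ)
    (hr : κ ^ (q + 3) ≤ r) :
    C * r ^ (-α) / Real.log ((κ + 3) ^ (q + 3) / (κ + 2) ^ (q + 3)) +
      C * (κ + 2) ^ (q + 3) / (κ ^ (q + 2)) ^ 2 * (1 + 2 * Real.log (2 * (κ + 2) ^ (q + 3)) /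
        Real.log ((κ + 3) ^ (q + 3) / (κ + 2) ^ (q + 3))) ≤
    4 * C * κ ^ (1 - α * (q + 3)) + C * 3 ^ (q + 3) * (16 * (q + 3) + 9) * κ ^ (1 - q : ℝ) := by
  have hκ0 : 0 < κ := by linarith
  set L := Real.log ((κ + 3) ^ (q + 3) / (κ + 2) ^ (q + 3)) with hL
  have hL1 : 1 / (4 * κ) ≤ L := by
    rw [hL, ← div_pow, Real.log_pow]
    have h1 := Real.one_sub_inv_le_log_of_pos (x := (κ + 3) / (κ + 2)) (by positivity)
    have h2 : 1 - ((κ + 3) / (κ + 2))⁻¹ = 1 / (κ + 3) := by field_simp; ring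
    rw [h2] at h1
    have h3 : 1 / (4 * κ) ≤ 1 / (κ + 3) := by gcongr; linarith
    have h4 : (1:ℝ) ≤ ((q + 3 : ℕ):ℝ) := by push_cast; linarith [Nat.cast_nonneg (α := ℝ) q]
    have h5 : 0 < 1 / (κ + 3) := by positivity
    nlinarith
  have hL0 : 0 < L := lt_of_lt_of_le (by positivity) hL1
  have hLi : L⁻¹ ≤ 4 * κ := by
    have := inv_anti₀ (by positivity) hL1
    simpa using this
  have hlog : Real.log (2 * (κ + 2) ^ (q + 3)) ≤ (2 * (q + 3) + 1) * κ := by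
    rw [Real.log_mul (by norm_num) (by positivity), Real.log_pow]
    have h1 := Real.log_le_sub_one_of_pos (x := κ + 2) (by positivity)
    have h2 := Real.log_le_sub_one_of_pos (x := 2) (by positivity)
    have h3 : ((q + 3 : ℕ):ℝ) * Real.log (κ + 2) ≤ ((q + 3 : ℕ):ℝ) * (2 * κ) := by
      gcongr; linarith
    push_cast at h3 ⊢
    nlinarith
  have hlog0 : 0 ≤ Real.log (2 * (κ + 2) ^ (q + 3)) := by
    apply Real.log_nonneg
    have : 1 ≤ (κ + 2) ^ (q + 3) := one_le_pow₀ (by linarith)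
    linarith
  have hr0 : 0 < r := lt_of_lt_of_le (by positivity) hr
  have hra : r ^ (-α) ≤ κ ^ (-α * (q + 3)) := by
    have h1 : r ^ (-α) ≤ (κ ^ (q + 3)) ^ (-α) :=
      Real.rpow_le_rpow_of_nonpos (by positivity) hr (by linarith)
    refine h1.trans (le_of_eq ?_)
    rw [← Real.rpow_natCast, ← Real.rpow_mul hκ0.le]
    congr 1; push_cast; ring
  have hR : (κ + 2) ^ (q + 3) ≤ 3 ^ (q + 3) * κ ^ (q + 3) := by
    rw [← mul_pow]; gcongr; linarith
  have q0 := Nat.cast_nonneg (α := ℝ) q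
  apply add_le_add
  · rw [div_eq_mul_inv]
    calc C * r ^ (-α) * L⁻¹ ≤ C * κ ^ (-α * (q + 3)) * (4 * κ) := by gcongr
      _ = _ := by
        rw [show 1 - α * ((q:ℝ) + 3) = -α * (q + 3) + 1 by ring, Real.rpow_add hκ0, Real.rpow_one]
        ring
  · have h1 : 1 + 2 * Real.log (2 * (κ + 2) ^ (q + 3)) / L ≤ (16 * (q + 3) + 9) * κ ^ 2 := by
      rw [div_eq_mul_inv]
      have : 2 * Real.log (2 * (κ + 2) ^ (q + 3)) * L⁻¹ ≤ 2 * ((2 * (q + 3) + 1) * κ) * (4 * κ) := by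
        gcongr
      nlinarith
    calc _ ≤ C * (3 ^ (q + 3) * κ ^ (q + 3)) / (κ ^ (q + 2)) ^ 2 * ((16 * (q + 3) + 9) * κ ^ 2) := by
          gcongr
      _ = C * 3 ^ (q + 3) * (16 * (q + 3) + 9) * (κ ^ (q + 3) * κ ^ 2 / (κ ^ (q + 2)) ^ 2) := by ring
      _ = _ := by
        congr 1
        rw [Real.rpow_sub hκ0, Real.rpow_one, Real.rpow_natCast]
        field_simp
        ring


lemma core_lim (T A : ℝ → ℝ) (hm : MonotoneOn T (Set.Ioi 0)) (hA0 : ∀ r, 0 ≤ A r)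
    (hpos : ∃ r₀ : ℝ, 1 ≤ r₀ ∧ 0 < T r₀)
    (hord : IsBoundedUnder (· ≤ ·) atTop fun r : ℝ => Real.log (T r) / Real.log r)
    (δ : ℝ) (hδ : δ < 1) (s K : ℝ) (hs : 0 ≤ s)
    (hest : ∀ α : ℝ, 0 < α → α < 1 → ∃ C C₀ : ℝ, 0 ≤ C ∧ 0 ≤ C₀ ∧
      ∀ r R R' d : ℝ, 0 < r → 1 ≤ R → R < R' → 0 < d → r + K ≤ R - d →
      A r ≤ (C * r ^ (-α) / Real.log (R' / R) +
        C * R / d ^ 2 * (1 + 2 * Real.log (2 * R) / Real.log (R' / R))) * (2 * T R' + C₀)) :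
    ∃ E : Set ℝ, FinLogMeasure E ∧
      Tendsto (fun r : ℝ => A r / (T (r + s) / r ^ δ)) (atTop ⊓ 𝓟 Eᶜ) (𝓝 0) := by
  set δ' := max δ 0 with hδ'
  have hδ'0 : 0 ≤ δ' := le_max_right _ _
  have hδ'1 : δ' < 1 := max_lt hδ one_pos
  obtain ⟨q, hq⟩ := exists_nat_gt (4 / (1 - δ'))
  have hq4 : 4 < (q + 3) * (1 - δ') := by
    rw [div_lt_iff₀ (by linarith)] at hq
    nlinarith
  set α := (1 + δ') / 2 with hα
  obtain ⟨C, C₀, hC, hC₀, H⟩ := hest α (by positivity) (by rw [hα]; linarith)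
  obtain ⟨r₀, hr₀, hTr₀⟩ := hpos
  obtain ⟨k₀, hk₀⟩ := exists_nat_ge (max r₀ 1)
  have hk1 : (1:ℝ) ≤ k₀ := (le_max_right _ _).trans hk₀
  have hk1' : 1 ≤ k₀ := by exact_mod_cast hk1
  set c₀ := T ((k₀:ℝ) ^ (q + 3)) with hc₀
  have hc₀pos : 0 < c₀ := by
    apply hTr₀.trans_le
    apply hm (Set.mem_Ioi.2 (by linarith)) (Set.mem_Ioi.2 (by positivity))
    exact ((le_max_left _ _).trans hk₀).trans (le_self_pow₀ hk1 (by omega))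
  obtain ⟨B, hB⟩ := log_growth T hm k₀ (q + 3) hk1' (by omega) hc₀pos hord
  set u : ℕ → ℝ := fun j => T (((k₀ + j : ℕ) : ℝ) ^ (q + 3)) with hu
  have hum : Monotone u := by
    intro i j hij
    apply hm (Set.mem_Ioi.2 (by push_cast; positivity)) (Set.mem_Ioi.2 (by push_cast; positivity))
    gcongr
  have hsum := summ_bad u hum (by simpa [hu] using hc₀pos) B hB
  set S := {j : ℕ | 2 * u j < u (j + 3)} with hS
  refine ⟨_, finlog_union S k₀ (q + 3) hk1' hsum, ?_⟩
  set E := ⋃ j ∈ S, Set.Icc (((k₀ + j : ℕ):ℝ) ^ (q + 3)) (((k₀ + j + 1 : ℕ):ℝ) ^ (q + 3)) with hE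
  set kk : ℝ → ℕ := fun r => ⌊r ^ (1 / ((q:ℝ) + 3))⌋₊ with hkk
  have q0 := Nat.cast_nonneg (α := ℝ) q
  have hkt : Tendsto kk atTop atTop :=
    tendsto_nat_floor_atTop.comp (tendsto_rpow_atTop (by positivity))
  have hkt' : Tendsto (fun r => (kk r : ℝ)) atTop atTop :=
    tendsto_natCast_atTop_atTop.comp hkt
  set e₁ := α * (q + 3) - 1 - δ' * (q + 3) with he₁
  set e₂ := (q:ℝ) - 1 - δ' * (q + 3) with he₂
  have he₁0 : 0 < e₁ := by rw [he₁, hα]; nlinarith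
  have he₂0 : 0 < e₂ := by rw [he₂]; nlinarith
  set M := (4 + C₀ / c₀) * 2 ^ (q + 3) with hM
  set b : ℝ → ℝ := fun κ => M * (4 * C * κ ^ (-e₁) +
    C * 3 ^ (q + 3) * (16 * (q + 3) + 9) * κ ^ (-e₂)) with hb
  have hbt : Tendsto (fun r => b (kk r)) (atTop ⊓ 𝓟 Eᶜ) (𝓝 0) := by
    have h1 : Tendsto b atTop (𝓝 (M * (4 * C * 0 +
      C * 3 ^ (q + 3) * (16 * (q + 3) + 9) * 0))) :=
      (((tendsto_rpow_neg_atTop he₁0).const_mul _).add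
        ((tendsto_rpow_neg_atTop he₂0).const_mul _)).const_mul _
    simp only [mul_zero, add_zero] at h1
    exact (h1.comp hkt').mono_left inf_le_left
  have hev : ∀ᶠ r in atTop ⊓ 𝓟 Eᶜ, 1 ≤ r ∧ k₀ ≤ kk r ∧ K ≤ kk r ∧ r ∉ E := by
    rw [eventually_inf_principal]
    filter_upwards [eventually_ge_atTop (1:ℝ), hkt.eventually_ge_atTop k₀,
      hkt'.eventually_ge_atTop K] with r a1 a2 a3 a4
    exact ⟨a1, a2, a3, a4⟩
  have hfin : ∀ r, 1 ≤ r ∧ k₀ ≤ kk r ∧ K ≤ kk r ∧ r ∉ E →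
      0 ≤ A r / (T (r + s) / r ^ δ) ∧ A r / (T (r + s) / r ^ δ) ≤ b (kk r) := by
    rintro r ⟨hr1, hk, hK, hrE⟩
    have hr0 : 0 < r := by linarith
    obtain ⟨j, hj⟩ := Nat.exists_eq_add_of_le hk
    set κ : ℝ := (kk r : ℝ) with hκ
    have hκk : (k₀:ℝ) ≤ κ := Nat.cast_le.2 hk
    have hκ1 : 1 ≤ κ := hk1.trans hκk
    have hκ0 : 0 < κ := by linarith
    have hroot : (r ^ (1 / ((q:ℝ) + 3))) ^ (q + 3) = r := by
      rw [← Real.rpow_natCast, ← Real.rpow_mul hr0.le]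
      push_cast
      rw [one_div_mul_cancel (by positivity), Real.rpow_one]
    have hlo : κ ^ (q + 3) ≤ r := by
      calc κ ^ (q + 3) ≤ (r ^ (1 / ((q:ℝ) + 3))) ^ (q + 3) := by
            gcongr
            exact Nat.floor_le (by positivity)
        _ = r := hroot
    have hhi : r ≤ (κ + 1) ^ (q + 3) := by
      calc r = (r ^ (1 / ((q:ℝ) + 3))) ^ (q + 3) := hroot.symm
        _ ≤ (κ + 1) ^ (q + 3) := by
            gcongr
            exact (Nat.lt_floor_add_one _).le
    have hκj : κ = ((k₀ + j : ℕ):ℝ) := by rw [hκ, hj]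
    have hjS : j ∉ S := by
      intro hjS
      apply hrE
      simp only [hE, Set.mem_iUnion]
      refine ⟨j, hjS, ?_, ?_⟩
      · rw [← hκj]; exact hlo
      · rw [Nat.cast_succ, ← hκj]; exact hhi
    have hT1 : T ((κ + 3) ^ (q + 3)) ≤ 2 * T (κ ^ (q + 3)) := by
      simp only [hS, Set.mem_ofPred_eq, not_lt, hu] at hjS
      have e3 : ((k₀ + (j + 3) : ℕ):ℝ) = κ + 3 := by rw [hκj]; push_cast; ring
      rw [e3, ← hκj] at hjS
      exact hjS
    have hT2 : T (κ ^ (q + 3)) ≤ T (r + s) :=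
      hm (Set.mem_Ioi.2 (by positivity)) (Set.mem_Ioi.2 (by positivity)) (by linarith)
    have hT3 : c₀ ≤ T (κ ^ (q + 3)) := by
      apply hm (Set.mem_Ioi.2 (by positivity)) (Set.mem_Ioi.2 (by positivity))
      gcongr
    have hTpos : 0 < T (r + s) := by linarith
    have hrδ : 0 < r ^ δ := by positivity
    refine ⟨div_nonneg (hA0 r) (by positivity), ?_⟩
    rw [div_div_eq_mul_div, div_le_iff₀ hTpos]
    have hst := step_ineq (q := q) hκ1 hK
    have hest := H r ((κ + 2) ^ (q + 3)) ((κ + 3) ^ (q + 3)) (κ ^ (q + 2)) hr0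
      (one_le_pow₀ (by linarith)) (by gcongr; norm_num) (by positivity) (by linarith)
    have hcoef := coeff_bound (α := α) (q := q) hC (by positivity) hκ1 hlo
    have hQ : 2 * T ((κ + 3) ^ (q + 3)) + C₀ ≤ (4 + C₀ / c₀) * T (r + s) := by
      have : C₀ ≤ C₀ / c₀ * T (r + s) := by
        rw [div_mul_eq_mul_div, le_div_iff₀ hc₀pos]
        gcongr
        linarith
      linarith
    have hQ0 : 0 ≤ 2 * T ((κ + 3) ^ (q + 3)) + C₀ := by
      have : T (κ ^ (q + 3)) ≤ T ((κ + 3) ^ (q + 3)) := by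
        apply hm (Set.mem_Ioi.2 (by positivity)) (Set.mem_Ioi.2 (by positivity))
        gcongr; linarith
      linarith
    have hrp : r ^ δ ≤ 2 ^ (q + 3) * κ ^ (δ' * (q + 3)) := by
      calc r ^ δ ≤ r ^ δ' := Real.rpow_le_rpow_of_exponent_le hr1 (le_max_left _ _)
        _ ≤ (2 ^ (q + 3) * κ ^ (q + 3)) ^ δ' := by
            gcongr
            refine hhi.trans ?_
            rw [← mul_pow]; gcongr; linarith
        _ = (2 ^ (q + 3)) ^ δ' * κ ^ (δ' * (q + 3)) := by
            rw [Real.mul_rpow (by positivity) (by positivity), ← Real.rpow_natCast κ,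
              ← Real.rpow_mul hκ0.le]
            congr 2; push_cast; ring
        _ ≤ _ := by
            gcongr
            calc ((2:ℝ) ^ (q + 3)) ^ δ' ≤ ((2:ℝ) ^ (q + 3)) ^ (1:ℝ) :=
                  Real.rpow_le_rpow_of_exponent_le (one_le_pow₀ (by norm_num)) hδ'1.le
              _ = _ := Real.rpow_one _
    have hP0 : 0 ≤ 4 * C * κ ^ (1 - α * (q + 3)) +
        C * 3 ^ (q + 3) * (16 * (q + 3) + 9) * κ ^ (1 - q : ℝ) := by positivity
    calc A r * r ^ δ ≤ ((4 * C * κ ^ (1 - α * (q + 3)) +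
        C * 3 ^ (q + 3) * (16 * (q + 3) + 9) * κ ^ (1 - q : ℝ)) * ((4 + C₀ / c₀) * T (r + s))) *
          (2 ^ (q + 3) * κ ^ (δ' * (q + 3))) := by
          apply mul_le_mul _ hrp hrδ.le (by positivity)
          exact hest.trans (mul_le_mul hcoef hQ hQ0 hP0)
      _ = _ := by
        have x1 : κ ^ (-e₁) = κ ^ (1 - α * (q + 3)) * κ ^ (δ' * (q + 3)) := by
          rw [← Real.rpow_add hκ0]; congr 1; rw [he₁]; ring
        have x2 : κ ^ (-e₂) = κ ^ (1 - q : ℝ) * κ ^ (δ' * (q + 3)) := by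
          rw [← Real.rpow_add hκ0]; congr 1; rw [he₂]; ring
        simp only [hb]
        rw [x1, x2, hM]; ring
  exact squeeze_zero' (hev.mono fun r hr => (hfin r hr).1) (hev.mono fun r hr => (hfin r hr).2) hbt


lemma char_zero_of_top {f : ℂ → ℂ} (hf : Meromorphic f) (h : ∃ z, meromorphicOrderAt f z = ⊤)
    {r : ℝ} (hr : 0 < r) : ValueDistribution.characteristic f ⊤ r = 0 := by
  obtain ⟨z, hz⟩ := h
  have hall : ∀ w, meromorphicOrderAt f w = ⊤ := by
    intro w
    by_contra hw
    have hU : MeromorphicOn f Set.univ := fun z _ => hf z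
    exact hU.meromorphicOrderAt_ne_top_of_isPreconnected isPreconnected_univ (Set.mem_univ w)
      (Set.mem_univ z) hw hz
  have h0 : f =ᶠ[codiscrete ℂ] fun _ => 0 := by
    rw [Filter.EventuallyEq, Filter.Eventually, mem_codiscrete]
    intro w
    rw [Filter.disjoint_principal_right, compl_compl]
    exact meromorphicOrderAt_eq_top_iff.1 (hall w)
  rw [ValueDistribution.characteristic_congr_codiscrete h0 hr.ne']
  simp [ValueDistribution.characteristic]

/-- For a non-constant finite-order meromorphic function `f`, `c, h ∈ ℂ` and `δ < 1`,
`m(r, f(z+c)/f(z+h)) = o(T(r+|c−h|+|h|, f) / r^δ)` as `r → ∞` outside a possible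
exceptional set of finite logarithmic measure. -/
theorem log_difference_lemma_two_shifts (f : ℂ → ℂ) (hf : MeromorphicOn f Set.univ)
    (hnc : Nonconstant f) (hord : FiniteOrder f) (c h : ℂ) (δ : ℝ) (hδ : δ < 1) :
    ∃ E : Set ℝ, FinLogMeasure E ∧
      Tendsto (fun r : ℝ => nevm (fun z => f (z + c) / f (z + h)) r /
          (nevT f (r + ‖c - h‖ + ‖h‖) / r ^ δ))
        (atTop ⊓ 𝓟 Eᶜ) (𝓝 0) := by
  have hm : Meromorphic f := fun z => hf z (Set.mem_univ z)
  by_cases hpos : ∃ r₀ : ℝ, 1 ≤ r₀ ∧ 0 < nevT f r₀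
  · have hordne : ∀ z, meromorphicOrderAt f z ≠ ⊤ := by
      intro z hz
      obtain ⟨r₀, h1, h2⟩ := hpos
      rw [nevT_eq hm (by linarith), char_zero_of_top hm ⟨z, hz⟩ (by linarith)] at h2
      exact lt_irrefl _ h2
    have hmono : MonotoneOn (nevT f) (Set.Ioi 0) := by
      intro a ha b hb hab
      rw [nevT_eq hm ha, nevT_eq hm hb]
      exact ValueDistribution.characteristic_monotoneOn hm ha hb hab
    have key := core_lim (nevT f) (fun r => nevm (fun z => f (z + c) / f (z + h)) r) hmono
      (by
        intro r
        simp only [nevm_eq]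
        exact Real.circleAverage_nonneg_of_nonneg (fun z _ => Real.posLog_nonneg)) hpos hord δ hδ
      (‖c - h‖ + ‖h‖) (max ‖c‖ ‖h‖) (by positivity) (by
        intro α h0 h1
        obtain ⟨C, C₀, hC, hC₀, H⟩ := est2 hm hordne h0 h1 c h
        refine ⟨C, C₀, hC, hC₀, ?_⟩
        intro r R R' d hr hR hRR hd hle
        rw [nevm_eq, nevT_eq hm (by linarith)]
        have b1 := le_max_left ‖c‖ ‖h‖
        have b2 := le_max_right ‖c‖ ‖h‖
        exact H r R R' d hr hR hRR hd (by linarith) (by linarith))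
    obtain ⟨E, hE, ht⟩ := key
    refine ⟨E, hE, ?_⟩
    simpa only [add_assoc] using ht
  · refine ⟨∅, ⟨Set.empty_subset _, by simp⟩, ?_⟩
    have hz : ∀ r : ℝ, 1 ≤ r → nevT f r = 0 := by
      intro r hr
      push Not at hpos
      apply le_antisymm (hpos r hr)
      rw [nevT_eq hm (by linarith)]
      exact ValueDistribution.characteristic_nonneg hr
    apply Tendsto.mono_left _ inf_le_left
    apply tendsto_const_nhds.congr'
    filter_upwards [eventually_ge_atTop (1:ℝ)] with r hr
    rw [hz _ (by linarith [norm_nonneg (c - h), norm_nonneg h])]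
    simp
end

section
/- For every a ∈ ℂ, every δ with 0 < δ < 1, and every r > 0, one has ∫₀^{2π} dθ / |re^{iθ} − a|^δ ≤ (2π / (1−δ)) · (1 / r^δ). -/
open MeasureTheory Filter Topology Metric

lemma circ_norm_aux (a : ℂ) (r : ℝ) (hr : 0 < r) (x : ℝ) :
    r * |Real.sin x| ≤ ‖circ r (x + a.arg) - a‖ := by
  have h : circ r (x + a.arg) - a =
      ((r : ℂ) * Complex.exp (x * Complex.I) - (‖a‖ : ℂ)) * Complex.exp (a.arg * Complex.I) := by
    have ha := Complex.norm_mul_exp_arg_mul_I a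
    rw [sub_mul, ha]
    unfold circ
    push_cast
    rw [add_mul, Complex.exp_add]
    ring
  rw [h, norm_mul, Complex.norm_exp_ofReal_mul_I, mul_one]
  refine le_trans (le_of_eq ?_) (Complex.abs_im_le_norm _)
  simp [Complex.exp_ofReal_mul_I_im, abs_mul, abs_of_pos hr]

lemma quarter_aux (F : ℝ → ℝ) (C δ : ℝ) (hδ1 : δ < 1) (h0 : ∀ x, 0 ≤ F x)
    (h : ∀ x, 0 < x → x ≤ Real.pi / 2 → F x ≤ C * x ^ (-δ)) :
    ∫ x in (0:ℝ)..(Real.pi / 2), F x ≤ C * ((Real.pi / 2) ^ (1 - δ) / (1 - δ)) := by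
  have hp : (0:ℝ) ≤ Real.pi / 2 := by positivity
  have hint : IntervalIntegrable (fun x : ℝ => C * x ^ (-δ)) volume 0 (Real.pi / 2) :=
    (intervalIntegral.intervalIntegrable_rpow' (by linarith)).const_mul C
  have hv : ∫ x in (0:ℝ)..(Real.pi / 2), C * x ^ (-δ) =
      C * ((Real.pi / 2) ^ (1 - δ) / (1 - δ)) := by
    rw [intervalIntegral.integral_const_mul, integral_rpow (Or.inl (by linarith)),
      Real.zero_rpow (by linarith), show -δ + 1 = 1 - δ by ring, sub_zero]
  rw [← hv, intervalIntegral.integral_of_le hp, intervalIntegral.integral_of_le hp]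
  refine integral_mono_of_nonneg (ae_of_all _ h0)
    ((intervalIntegrable_iff_integrableOn_Ioc_of_le hp).1 hint) ?_
  filter_upwards [ae_restrict_mem measurableSet_Ioc] with x hx
  exact h x hx.1 hx.2

theorem circle_integral_inv_rpow_bound (a : ℂ) (δ r : ℝ) (hδ0 : 0 < δ) (hδ1 : δ < 1)
    (hr : 0 < r) :
    ∫ θ in (0:ℝ)..(2 * Real.pi), 1 / ‖circ r θ - a‖ ^ δ ≤
      2 * Real.pi / (1 - δ) * (1 / r ^ δ) := by
  have hpi := Real.pi_pos
  set f : ℝ → ℝ := fun θ => 1 / ‖circ r θ - a‖ ^ δ with hf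
  have hper : Function.Periodic f (2 * Real.pi) := by
    intro x
    have : circ r (x + 2 * Real.pi) = circ r x := by
      unfold circ
      push_cast
      rw [add_mul, Complex.exp_add, Complex.exp_two_pi_mul_I, mul_one]
    simp only [hf, this]
  obtain ⟨k, hk⟩ : ∃ k : ℝ → ℝ, k = fun x => f (x + a.arg) := ⟨_, rfl⟩
  have e1 : ∫ θ in (0:ℝ)..(2 * Real.pi), f θ = ∫ x in (0:ℝ)..(2 * Real.pi), k x := by
    rw [hk, intervalIntegral.integral_comp_add_right f a.arg]
    have := hper.intervalIntegral_add_eq 0 a.arg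
    rw [zero_add] at this
    rw [this, zero_add, add_comm]
  have hk0 : ∀ x, 0 ≤ k x := fun x => by simp only [hk, hf]; positivity
  rw [e1]
  have hC : ∀ y x : ℝ, 0 < x → x ≤ Real.pi / 2 → |Real.sin y| = |Real.sin x| →
      k y ≤ ((2 / Real.pi * r) ^ (-δ)) * x ^ (-δ) := by
    intro y x hx hx2 hs
    have h1 := circ_norm_aux a r hr y
    have h2 : 2 / Real.pi * x ≤ |Real.sin y| := by
      rw [hs]; exact (Real.mul_le_sin hx.le hx2).trans (le_abs_self _)
    have h3 : 2 / Real.pi * r * x ≤ ‖circ r (y + a.arg) - a‖ := by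
      refine le_trans ?_ h1
      have := mul_le_mul_of_nonneg_left h2 hr.le
      linarith
    have h4 : 0 < 2 / Real.pi * r * x := by positivity
    rw [← Real.mul_rpow (by positivity) hx.le, Real.rpow_neg h4.le, ← one_div]
    simp only [hk, hf]
    gcongr
  set Q := (2 / Real.pi * r) ^ (-δ) * ((Real.pi / 2) ^ (1 - δ) / (1 - δ)) with hQ
  have hfin : 4 * Q = 2 * Real.pi / (1 - δ) * (1 / r ^ δ) := by
    rw [hQ, Real.mul_rpow (by positivity) hr.le, Real.rpow_neg hr.le,
      Real.rpow_neg (by positivity), ← Real.inv_rpow (by positivity), inv_div]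
    have : (Real.pi / 2) ^ δ * (Real.pi / 2) ^ (1 - δ) = Real.pi / 2 := by
      rw [← Real.rpow_add (by positivity)]; simp
    calc _ = 4 * ((Real.pi / 2) ^ δ * (Real.pi / 2) ^ (1 - δ)) / (1 - δ) * (1 / r ^ δ) := by ring
      _ = _ := by rw [this]; ring
  rw [← hfin]
  have hQ0 : 0 ≤ Q := by
    have : 0 < 1 - δ := by linarith
    positivity
  by_cases hi : IntervalIntegrable k volume 0 (2 * Real.pi)
  swap
  · rw [intervalIntegral.integral_undef hi]; linarith
  have sub : ∀ u v : ℝ, 0 ≤ u → u ≤ v → v ≤ 2 * Real.pi → IntervalIntegrable k volume u v := by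
    intro u v hu huv hv
    refine hi.mono_set ?_
    rw [Set.uIcc_of_le huv, Set.uIcc_of_le (by linarith)]
    exact Set.Icc_subset_Icc hu hv
  have q1 : ∫ x in (0:ℝ)..(Real.pi / 2), k x ≤ Q :=
    quarter_aux k _ δ hδ1 hk0 fun x h1 h2 => hC x x h1 h2 rfl
  have q2 : ∫ x in (Real.pi / 2)..Real.pi, k x ≤ Q := by
    have := quarter_aux (fun x => k (Real.pi - x)) _ δ hδ1 (fun x => hk0 _)
      fun x h1 h2 => hC _ x h1 h2 (by rw [Real.sin_pi_sub])
    rwa [intervalIntegral.integral_comp_sub_left k, sub_zero, sub_half] at this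
  have q3 : ∫ x in Real.pi..(Real.pi + Real.pi / 2), k x ≤ Q := by
    have := quarter_aux (fun x => k (Real.pi + x)) _ δ hδ1 (fun x => hk0 _)
      fun x h1 h2 => hC _ x h1 h2 (by rw [add_comm Real.pi x, Real.sin_add_pi, abs_neg])
    rwa [intervalIntegral.integral_comp_add_left k, add_zero] at this
  have q4 : ∫ x in (Real.pi + Real.pi / 2)..(2 * Real.pi), k x ≤ Q := by
    have := quarter_aux (fun x => k (2 * Real.pi - x)) _ δ hδ1 (fun x => hk0 _)
      fun x h1 h2 => hC _ x h1 h2 (by rw [Real.sin_two_pi_sub, abs_neg])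
    rwa [intervalIntegral.integral_comp_sub_left k, sub_zero,
      show 2 * Real.pi - Real.pi / 2 = Real.pi + Real.pi / 2 by ring] at this
  rw [← intervalIntegral.integral_add_adjacent_intervals
      (sub 0 Real.pi le_rfl (by linarith) (by linarith))
      (sub Real.pi (2 * Real.pi) (by linarith) (by linarith) le_rfl),
    ← intervalIntegral.integral_add_adjacent_intervals
      (sub 0 (Real.pi / 2) le_rfl (by linarith) (by linarith))
      (sub (Real.pi / 2) Real.pi (by linarith) (by linarith) (by linarith)),
    ← intervalIntegral.integral_add_adjacent_intervals
      (sub Real.pi (Real.pi + Real.pi / 2) (by linarith) (by linarith) (by linarith))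
      (sub (Real.pi + Real.pi / 2) (2 * Real.pi) (by linarith) (by linarith) le_rfl)]
  linarith
end

section
/- For all a, c ∈ ℂ, every δ with 0 < δ < 1, and every r > 0, one has (1/2π) ∫₀^{2π} log⁺ | 1 + c/(re^{iθ} − a) | dθ ≤ |c|^δ / ( δ(1−δ) r^δ ). -/
open MeasureTheory Filter Topology Metric

lemma aux_log (x δ : ℝ) (hx : 0 ≤ x) (h0 : 0 < δ) (h1 : δ < 1) :
    Real.log (1 + x) ≤ x ^ δ / δ := by
  rw [le_div_iff₀ h0, mul_comm, ← Real.log_rpow (by linarith)]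
  have h := Real.rpow_add_le_add_rpow (p := δ) zero_le_one hx h0.le h1.le
  rw [Real.one_rpow] at h
  have hx' : 0 ≤ x ^ δ := Real.rpow_nonneg hx δ
  calc Real.log ((1 + x) ^ δ) ≤ Real.log (1 + x ^ δ) :=
        Real.log_le_log (Real.rpow_pos_of_pos (by linarith) _) h
    _ ≤ (1 + x ^ δ) - 1 := Real.log_le_sub_one_of_pos (by linarith)
    _ = x ^ δ := by ring

lemma aux_logPlus (w : ℂ) (δ : ℝ) (h0 : 0 < δ) (h1 : δ < 1) :
    logPlus ‖1 + w‖ ≤ ‖w‖ ^ δ / δ := by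
  have hw := norm_nonneg w
  unfold logPlus
  refine max_le ?_ (by positivity)
  rcases (norm_nonneg (1 + w)).eq_or_lt with h | h
  · rw [← h, Real.log_zero]; positivity
  · refine (Real.log_le_log h ?_).trans (aux_log _ δ hw h0 h1)
    simpa using norm_add_le 1 w

lemma aux_dist (a : ℂ) (r θ : ℝ) (hr : 0 < r) :
    r * |Real.sin (θ - a.arg)| ≤ ‖circ r θ - a‖ := by
  have e : circ r θ - a = Complex.exp (a.arg * Complex.I) *
      (r * Complex.exp ((θ - a.arg : ℝ) * Complex.I) - (‖a‖ : ℝ)) := by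
    conv_lhs => rw [← Complex.norm_mul_exp_arg_mul_I a]
    unfold circ
    rw [mul_sub, mul_left_comm, ← Complex.exp_add]
    have : (a.arg : ℂ) * Complex.I + ((θ - a.arg : ℝ) : ℂ) * Complex.I = θ * Complex.I := by
      push_cast; ring
    rw [this, mul_comm (‖a‖ : ℂ)]
  rw [e, norm_mul, Complex.norm_exp_ofReal_mul_I, one_mul]
  refine le_trans (le_of_eq ?_) (Complex.abs_im_le_norm _)
  rw [Complex.sub_im, Complex.ofReal_im, sub_zero, Complex.im_ofReal_mul,
    Complex.exp_ofReal_mul_I_im, abs_mul, abs_of_pos hr]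

lemma aux_h_int (δ : ℝ) (h1 : δ < 1) :
    IntervalIntegrable (fun x : ℝ => (2 / Real.pi * |x|) ^ (-δ)) volume (-(Real.pi/2)) (Real.pi/2) := by
  have hp := Real.pi_pos
  have A : IntervalIntegrable (fun x : ℝ => (2 / Real.pi * |x|) ^ (-δ)) volume 0 (Real.pi/2) := by
    have := (intervalIntegral.intervalIntegrable_rpow' (a := 0) (b := Real.pi/2) (r := -δ)
      (by linarith)).const_mul ((2/Real.pi)^(-δ))
    refine this.congr ?_
    intro x hx
    rw [Set.uIoc_of_le (by positivity)] at hx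
    simp only
    rw [abs_of_pos hx.1, Real.mul_rpow (by positivity) hx.1.le]
  refine IntervalIntegrable.trans (b := 0) ?_ A
  have := IntervalIntegrable.comp_mul_left A (c := -1)
  simpa [div_neg] using this.symm

lemma aux_h_val (δ : ℝ) (h1 : δ < 1) :
    ∫ x in (-(Real.pi/2))..(Real.pi/2), (2 / Real.pi * |x|) ^ (-δ) = Real.pi / (1 - δ) := by
  have hp := Real.pi_pos
  have hI := aux_h_int δ h1
  have A : ∫ x in (0:ℝ)..(Real.pi/2), (2 / Real.pi * |x|) ^ (-δ) = Real.pi / 2 / (1 - δ) := by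
    have : ∫ x in (0:ℝ)..(Real.pi/2), (2 / Real.pi * |x|) ^ (-δ)
        = ∫ x in (0:ℝ)..(Real.pi/2), (2 / Real.pi * x) ^ (-δ) := by
      apply intervalIntegral.integral_congr
      intro x hx
      rw [Set.uIcc_of_le (by positivity)] at hx
      simp only
      rw [abs_of_nonneg hx.1]
    rw [this, intervalIntegral.integral_comp_mul_left (fun x : ℝ => x ^ (-δ)) (by positivity),
      integral_rpow (Or.inl (by linarith))]
    have e : 2 / Real.pi * (Real.pi / 2) = 1 := by field_simp
    have h2 : -δ + 1 ≠ 0 := by linarith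
    have h3 : 1 - δ ≠ 0 := by linarith
    rw [e, mul_zero, Real.zero_rpow h2, Real.one_rpow, smul_eq_mul]
    rw [show -δ + 1 = 1 - δ by ring]
    field_simp
    try ring
  have B : ∫ x in (-(Real.pi/2))..0, (2 / Real.pi * |x|) ^ (-δ) = Real.pi / 2 / (1 - δ) := by
    rw [← A]
    have := intervalIntegral.integral_comp_neg (a := 0) (b := Real.pi/2)
      (fun x : ℝ => (2 / Real.pi * |x|) ^ (-δ))
    simpa using this.symm
  have hm : (0:ℝ) ∈ Set.uIcc (-(Real.pi/2)) (Real.pi/2) := by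
    rw [Set.uIcc_of_le (by linarith)]; constructor <;> linarith
  rw [← intervalIntegral.integral_add_adjacent_intervals (b := 0)
    (hI.mono_set (Set.uIcc_subset_uIcc_left hm)) (hI.mono_set (Set.uIcc_subset_uIcc_right hm)), A, B]
  ring

lemma aux_le (δ x : ℝ) (h0 : 0 < δ) (hx : |x| ≤ Real.pi / 2) :
    |Real.sin x| ^ (-δ) ≤ (2 / Real.pi * |x|) ^ (-δ) := by
  have hp := Real.pi_pos
  by_cases h : x = 0
  · simp [h]
  · exact Real.rpow_le_rpow_of_nonpos (by positivity) (Real.mul_abs_le_abs_sin hx) (by linarith)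

lemma aux_per (δ : ℝ) : Function.Periodic (fun x : ℝ => |Real.sin x| ^ (-δ)) Real.pi := by
  intro x
  simp [Real.sin_add_pi]

lemma aux_g_int0 (δ : ℝ) (h0 : 0 < δ) (h1 : δ < 1) :
    IntervalIntegrable (fun x : ℝ => |Real.sin x| ^ (-δ)) volume (-(Real.pi/2)) (Real.pi/2) := by
  have hp := Real.pi_pos
  refine (aux_h_int δ h1).mono_fun' ?_ ?_
  · exact Measurable.aestronglyMeasurable (by fun_prop)
  · refine (ae_restrict_iff' measurableSet_uIoc).2 (Eventually.of_forall fun x hx => ?_)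
    rw [Set.uIoc_of_le (by linarith)] at hx
    show ‖|Real.sin x| ^ (-δ)‖ ≤ (2 / Real.pi * |x|) ^ (-δ)
    rw [Real.norm_of_nonneg (by positivity)]
    exact aux_le δ x h0 (abs_le.2 ⟨hx.1.le, hx.2⟩)

lemma aux_g_int (δ : ℝ) (h0 : 0 < δ) (h1 : δ < 1) (u v : ℝ) :
    IntervalIntegrable (fun x : ℝ => |Real.sin x| ^ (-δ)) volume u v := by
  refine (aux_per δ).intervalIntegrable (t := -(Real.pi/2)) Real.pi_ne_zero ?_ u v
  rw [show -(Real.pi/2) + Real.pi = Real.pi/2 by ring]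
  exact aux_g_int0 δ h0 h1

lemma aux_g_val (δ α : ℝ) (h0 : 0 < δ) (h1 : δ < 1) :
    ∫ x in (0:ℝ)..(2 * Real.pi), |Real.sin (x - α)| ^ (-δ) ≤ 2 * Real.pi / (1 - δ) := by
  have hp := Real.pi_pos
  have key : ∀ t : ℝ, ∫ x in t..(t + Real.pi), |Real.sin x| ^ (-δ) ≤ Real.pi / (1 - δ) := by
    intro t
    rw [(aux_per δ).intervalIntegral_add_eq t (-(Real.pi/2)), ← aux_h_val δ h1,
      show -(Real.pi/2) + Real.pi = Real.pi/2 by ring]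
    refine intervalIntegral.integral_mono_on (by linarith) (aux_g_int0 δ h0 h1) (aux_h_int δ h1) ?_
    intro x hx
    exact aux_le δ x h0 (abs_le.2 hx)
  rw [intervalIntegral.integral_comp_sub_right (fun x : ℝ => |Real.sin x| ^ (-δ)) α,
    ← intervalIntegral.integral_add_adjacent_intervals (b := 0 - α + Real.pi)
      (aux_g_int δ h0 h1 _ _) (aux_g_int δ h0 h1 _ _)]
  have k1 := key (0 - α)
  have k2 := key (0 - α + Real.pi)
  rw [show 0 - α + Real.pi + Real.pi = 2 * Real.pi - α by ring] at k2
  calc _ ≤ _ := add_le_add k1 k2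
    _ = _ := by ring

/-- For all `a, c ∈ ℂ`, `0 < δ < 1` and `r > 0`:
`(1/2π) ∫₀^{2π} log⁺|1 + c/(re^{iθ} − a)| dθ ≤ |c|^δ / (δ(1−δ) r^δ)`. -/
theorem circle_integral_logPlus_bound (a c : ℂ) (δ r : ℝ) (hδ0 : 0 < δ) (hδ1 : δ < 1)
    (hr : 0 < r) :
    (2 * Real.pi)⁻¹ * ∫ θ in (0:ℝ)..(2 * Real.pi), logPlus ‖1 + c / (circ r θ - a)‖ ≤
      ‖c‖ ^ δ / (δ * (1 - δ) * r ^ δ) := by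
  have hp := Real.pi_pos
  have hd : 0 < 1 - δ := by linarith
  have hrδ : 0 < r ^ δ := Real.rpow_pos_of_pos hr δ
  set K : ℝ := ‖c‖ ^ δ / (δ * r ^ δ) with hK
  have hK0 : 0 ≤ K := by positivity
  have hint : IntervalIntegrable (fun θ : ℝ => K * |Real.sin (θ - a.arg)| ^ (-δ)) volume
      0 (2 * Real.pi) := by
    have := (aux_g_int δ hδ0 hδ1 (0 - a.arg) (2 * Real.pi - a.arg)).comp_sub_right a.arg
    simp only [sub_add_cancel] at this
    exact this.const_mul K
  have hae : ∀ᵐ θ : ℝ, Real.sin (θ - a.arg) ≠ 0 := by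
    have hc : (Set.range fun n : ℤ => (n : ℝ) * Real.pi + a.arg).Countable :=
      Set.countable_range _
    filter_upwards [hc.ae_notMem volume] with θ hθ h
    obtain ⟨n, hn⟩ := Real.sin_eq_zero_iff.1 h
    exact hθ ⟨n, by simp only [hn]; ring⟩
  have hle : ∫ θ in (0:ℝ)..(2 * Real.pi), logPlus ‖1 + c / (circ r θ - a)‖ ≤
      ∫ θ in (0:ℝ)..(2 * Real.pi), K * |Real.sin (θ - a.arg)| ^ (-δ) := by
    rw [intervalIntegral.integral_of_le (by positivity),
      intervalIntegral.integral_of_le (by positivity)]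
    refine integral_mono_of_nonneg (Eventually.of_forall fun θ => le_max_right _ _)
      ((intervalIntegrable_iff_integrableOn_Ioc_of_le (by positivity)).1 hint) ?_
    filter_upwards [ae_restrict_of_ae hae] with θ hθ
    refine (aux_logPlus _ δ hδ0 hδ1).trans ?_
    have hs : 0 < |Real.sin (θ - a.arg)| := abs_pos.2 hθ
    have h1 := aux_dist a r θ hr
    have h2 : ‖c / (circ r θ - a)‖ ≤ ‖c‖ / (r * |Real.sin (θ - a.arg)|) := by
      rw [norm_div]
      gcongr
    have h3 := Real.rpow_le_rpow (norm_nonneg _) h2 hδ0.le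
    rw [Real.div_rpow (norm_nonneg _) (by positivity), Real.mul_rpow hr.le hs.le] at h3
    calc _ ≤ ‖c‖ ^ δ / (r ^ δ * |Real.sin (θ - a.arg)| ^ δ) / δ := by gcongr
      _ = _ := by
        rw [Real.rpow_neg hs.le, hK]
        field_simp
  rw [intervalIntegral.integral_const_mul] at hle
  calc _ ≤ (2 * Real.pi)⁻¹ * (K * (2 * Real.pi / (1 - δ))) := by
        refine mul_le_mul_of_nonneg_left (hle.trans ?_) (by positivity)
        exact mul_le_mul_of_nonneg_left (aux_g_val δ a.arg hδ0 hδ1) hK0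
    _ = _ := by
        rw [hK]
        field_simp
end

section
/- Let a, c ∈ ℂ and let s, r > 0 satisfy |a| < s and r + |c| < s. Then (1/2π) ∫₀^{2π} log⁺ | 1 + ā c / ( s² − ā (re^{iθ} + c) ) | dθ ≤ |c| / ( s − r − |c| ), and (1/2π) ∫₀^{2π} log⁺ | 1 − ā c / ( s² − ā re^{iθ} ) | dθ ≤ |c| / ( s − r ). -/
open MeasureTheory Filter Topology Metric

theorem logPlus_aux (a c w : ℂ) (s ρ : ℝ) (hs : 0 < s) (ha : ‖a‖ < s) (hw : ‖w‖ ≤ ρ)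
    (hρ : ρ < s) :
    ‖logPlus ‖1 + (starRingEnd ℂ) a * c / ((s : ℂ) ^ 2 - (starRingEnd ℂ) a * w)‖‖ ≤
      ‖c‖ / (s - ρ) := by
  have hd : s ^ 2 - ‖a‖ * ‖w‖ ≤ ‖(s : ℂ) ^ 2 - (starRingEnd ℂ) a * w‖ := by
    have h := norm_sub_norm_le ((s : ℂ) ^ 2) ((starRingEnd ℂ) a * w)
    simpa [abs_of_pos hs] using h
  have ha0 := norm_nonneg a
  have hw0 := norm_nonneg w
  have hc0 := norm_nonneg c
  have hq : ‖(starRingEnd ℂ) a * c / ((s : ℂ) ^ 2 - (starRingEnd ℂ) a * w)‖ ≤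
      ‖c‖ / (s - ρ) := by
    have hpos : 0 < s ^ 2 - ‖a‖ * ‖w‖ := by nlinarith
    have key : ‖a‖ * (s - ρ) ≤ ‖(s : ℂ) ^ 2 - (starRingEnd ℂ) a * w‖ := by nlinarith
    rw [norm_div, norm_mul, RCLike.norm_conj,
      div_le_div_iff₀ (lt_of_lt_of_le hpos hd) (by linarith)]
    nlinarith [mul_le_mul_of_nonneg_left key hc0]
  have hB : 0 ≤ ‖c‖ / (s - ρ) := div_nonneg hc0 (by linarith)
  have h0 : 0 ≤ logPlus ‖1 + (starRingEnd ℂ) a * c / ((s : ℂ) ^ 2 - (starRingEnd ℂ) a * w)‖ :=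
    le_max_right _ _
  rw [Real.norm_of_nonneg h0]
  refine max_le ?_ hB
  have h1 := norm_add_le (1 : ℂ) ((starRingEnd ℂ) a * c / ((s : ℂ) ^ 2 - (starRingEnd ℂ) a * w))
  rw [norm_one] at h1
  rcases (norm_nonneg (1 + (starRingEnd ℂ) a * c /
    ((s : ℂ) ^ 2 - (starRingEnd ℂ) a * w))).eq_or_lt with h | h
  · rw [← h, Real.log_zero]; exact hB
  · have := Real.log_le_sub_one_of_pos h
    linarith

theorem avg_aux (f : ℝ → ℝ) (C : ℝ) (h : ∀ θ, ‖f θ‖ ≤ C) :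
    (2 * Real.pi)⁻¹ * ∫ θ in (0:ℝ)..(2 * Real.pi), f θ ≤ C := by
  have hp := Real.two_pi_pos
  have h1 := intervalIntegral.norm_integral_le_of_norm_le_const
    (a := 0) (b := 2 * Real.pi) (f := f) (C := C) (fun x _ => h x)
  rw [sub_zero, abs_of_pos hp] at h1
  rw [inv_mul_le_iff₀ hp]
  have := Real.le_norm_self (∫ θ in (0:ℝ)..(2 * Real.pi), f θ)
  linarith

theorem norm_circ_aux (r θ : ℝ) (hr : 0 < r) : ‖circ r θ‖ = r := by
  simp [circ, Complex.norm_exp_ofReal_mul_I, abs_of_pos hr]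

/-- Let `a, c ∈ ℂ` and `s, r > 0` with `|a| < s` and `r + |c| < s`. Then
`(1/2π) ∫₀^{2π} log⁺|1 + ā c/(s² − ā(re^{iθ}+c))| dθ ≤ |c|/(s − r − |c|)` and
`(1/2π) ∫₀^{2π} log⁺|1 − ā c/(s² − ā re^{iθ})| dθ ≤ |c|/(s − r)`. -/
theorem circle_integral_reflected_terms_bound (a c : ℂ) (s r : ℝ)
    (hs : 0 < s) (hr : 0 < r) (ha : ‖a‖ < s) (hrc : r + ‖c‖ < s) :
    ((2 * Real.pi)⁻¹ * ∫ θ in (0:ℝ)..(2 * Real.pi),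
        logPlus ‖1 + (starRingEnd ℂ) a * c /
          ((s : ℂ) ^ 2 - (starRingEnd ℂ) a * (circ r θ + c))‖ ≤
      ‖c‖ / (s - r - ‖c‖)) ∧
    ((2 * Real.pi)⁻¹ * ∫ θ in (0:ℝ)..(2 * Real.pi),
        logPlus ‖1 - (starRingEnd ℂ) a * c /
          ((s : ℂ) ^ 2 - (starRingEnd ℂ) a * circ r θ)‖ ≤
      ‖c‖ / (s - r)) := by
  have hc0 := norm_nonneg c
  refine ⟨avg_aux _ _ fun θ => ?_, avg_aux _ _ fun θ => ?_⟩
  · have h := logPlus_aux a c (circ r θ + c) s (r + ‖c‖) hs ha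
      ((norm_add_le _ _).trans (by rw [norm_circ_aux r θ hr])) hrc
    rwa [← sub_sub] at h
  · have h := logPlus_aux a (-c) (circ r θ) s r hs ha (norm_circ_aux r θ hr).le (by linarith)
    rwa [norm_neg, mul_neg, neg_div, ← sub_eq_add_neg] at h
end

section
/- Let f be a meromorphic function on ℂ with f(0) ≠ 0, ∞, let c ∈ ℂ, r ≥ 1 and s > r + |c|. Then (1/2π) ∫₀^{2π} | (1/2π) ∫₀^{2π} log|f(se^{iθ})| · Re( 2 c s e^{iθ} / ( (se^{iθ} − re^{iφ} − c)(se^{iθ} − re^{iφ}) ) ) dθ | dφ ≤ ( 4|c|s / (s − r − |c|)² ) · ( T(s, f) + log⁺(1/|f(0)|) ). -/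
open MeasureTheory Filter Topology Metric

lemma poleOrd_eq_s15 (f : ℂ → ℂ) (x : ℂ) (hf : MeromorphicAt f x) :
    (poleOrd f x : ℤ) = max (-(meromorphicOrderAt f x).untop₀) 0 := by
  by_cases htop : meromorphicOrderAt f x = ⊤
  · have h0 : poleOrd f x = 0 := by
      unfold poleOrd
      rw [Nat.sInf_eq_zero]
      left
      refine ⟨0, analyticAt_const, ?_⟩
      filter_upwards [meromorphicOrderAt_eq_top_iff.1 htop] with w hw
      simp [hw]
    simp [h0, htop]
  · obtain ⟨g, hg, hg0, hfg⟩ := (meromorphicOrderAt_ne_top_iff hf).1 htop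
    set k := (meromorphicOrderAt f x).untop₀ with hk
    rcases le_or_gt 0 k with hk0 | hk0
    · have h0 : poleOrd f x = 0 := by
        unfold poleOrd
        rw [Nat.sInf_eq_zero]
        left
        refine ⟨fun z => (z - x) ^ k.toNat * g z, by fun_prop, ?_⟩
        filter_upwards [hfg] with w hw
        rw [hw]
        simp only [pow_zero, one_mul, smul_eq_mul]
        rw [← zpow_natCast, Int.toNat_of_nonneg hk0]
      simp [h0, hk0]
    · have hmem : (-k).toNat ∈ {n : ℕ | ∃ g : ℂ → ℂ, AnalyticAt ℂ g x ∧
          ∀ᶠ w in 𝓝[≠] x, (w - x) ^ n * f w = g w} := by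
        refine ⟨g, hg, ?_⟩
        filter_upwards [hfg, self_mem_nhdsWithin] with w hw hne
        have hne' : w - x ≠ 0 := sub_ne_zero.2 hne
        rw [hw, ← zpow_natCast, Int.toNat_of_nonneg (by omega), smul_eq_mul, ← mul_assoc,
          ← zpow_add₀ hne']
        simp
      have hle : poleOrd f x ≤ (-k).toNat := Nat.sInf_le hmem
      have hge : (-k).toNat ≤ poleOrd f x := by
        refine le_csInf ⟨_, hmem⟩ ?_
        rintro n ⟨G, hG, hGe⟩
        have h1 : meromorphicOrderAt G x = ((n + k : ℤ) : WithTop ℤ) := by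
          rw [meromorphicOrderAt_eq_int_iff hG.meromorphicAt]
          refine ⟨g, hg, hg0, ?_⟩
          filter_upwards [hfg, hGe, self_mem_nhdsWithin] with w hw hGw hne
          have hne' : w - x ≠ 0 := sub_ne_zero.2 hne
          rw [← hGw, hw, zpow_add₀ hne', zpow_natCast, smul_eq_mul, smul_eq_mul, mul_assoc]
        have h2 := hG.meromorphicOrderAt_nonneg
        rw [h1] at h2
        have h3 : (0:ℤ) ≤ n + k := by exact_mod_cast h2
        omega
      omega

lemma integrable_piece (p a s : ℝ) (ha : 0 < a) (has : a ≤ s) :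
    IntervalIntegrable (fun t : ℝ => (if a ≤ t then p else 0) / t) volume 0 s ∧
    ∫ t in (0:ℝ)..s, (if a ≤ t then p else 0) / t = p * Real.log (s * a⁻¹) := by
  have hs : 0 < s := ha.trans_le has
  have hfun : (fun t : ℝ => (if a ≤ t then p else 0) / t) =
      (Set.Ici a).indicator (fun t => p * t⁻¹) := by
    ext t
    by_cases h : a ≤ t <;> simp [h, div_eq_mul_inv]
  have hset : Set.Ici a ∩ Set.Ioc 0 s = Set.Icc a s := by
    ext t; simp only [Set.mem_inter_iff, Set.mem_Ici, Set.mem_Ioc, Set.mem_Icc]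
    constructor
    · rintro ⟨h, _, h2⟩; exact ⟨h, h2⟩
    · rintro ⟨h, h2⟩; exact ⟨h, ha.trans_le h, h2⟩
  constructor
  · rw [intervalIntegrable_iff_integrableOn_Ioc_of_le hs.le, hfun, IntegrableOn,
      integrable_indicator_iff measurableSet_Ici, IntegrableOn,
      Measure.restrict_restrict measurableSet_Ici, hset]
    apply ContinuousOn.integrableOn_Icc
    intro t ht
    have : t ≠ 0 := (ha.trans_le ht.1).ne'
    fun_prop (disch := assumption)
  · rw [hfun, intervalIntegral.integral_of_le hs.le, setIntegral_indicator measurableSet_Ici,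
      Set.inter_comm, hset, integral_Icc_eq_integral_Ioc, ← intervalIntegral.integral_of_le has,
      intervalIntegral.integral_const_mul, integral_inv_of_pos ha hs, div_eq_mul_inv]

lemma nevN_eq_s15 (f : ℂ → ℂ) (hf : MeromorphicOn f Set.univ) (h0 : AnalyticAt ℂ f 0)
    (s : ℝ) (hs : 0 < s) : nevN f s = ValueDistribution.logCounting f ⊤ s := by
  classical
  rw [ValueDistribution.logCounting_top]
  set D := (MeromorphicOn.divisor f Set.univ)⁻ with hD
  have hDp : ∀ z, D z = (poleOrd f z : ℤ) := by
    intro z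
    rw [poleOrd_eq_s15 f z (hf z trivial), hD]
    simp [Function.locallyFinsuppWithin.negPart_apply, MeromorphicOn.divisor_apply hf, negPart_def]
  have hp0 : poleOrd f 0 = 0 := by
    have h1 := poleOrd_eq_s15 f 0 (hf 0 trivial)
    have h2 := h0.meromorphicOrderAt_nonneg
    have h3 : 0 ≤ (meromorphicOrderAt f 0).untop₀ := by simp [h2]
    omega
  have hn0 : nevn f 0 = 0 := by
    simp [nevn, hp0]
  have hfin := (Function.locallyFinsuppWithin.toClosedBall s D).finiteSupport
    (isCompact_closedBall 0 |s|)
  set P := hfin.toFinset with hP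
  have hPmem : ∀ z, z ∈ P ↔ ‖z‖ ≤ s ∧ poleOrd f z ≠ 0 := by
    intro z
    by_cases hz : z ∈ closedBall (0:ℂ) |s|
    · have hz' : ‖z‖ ≤ s := by simpa [abs_of_pos hs] using hz
      simp [hP, Function.locallyFinsuppWithin.toClosedBall_eval_within D hz, hDp, hz']
    · have hz' : ¬ ‖z‖ ≤ s := by simpa [abs_of_pos hs] using hz
      simp [hP, hz', Function.locallyFinsuppWithin.apply_eq_zero_of_notMem _ hz]
  have hnt : ∀ t ≤ s, nevn f t = ∑ z ∈ P, if ‖z‖ ≤ t then poleOrd f z else 0 := by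
    intro t ht
    unfold nevn
    rw [finsum_mem_def, finsum_eq_sum_of_support_subset (s := P)]
    · refine Finset.sum_congr rfl fun z _ => ?_
      simp [Set.indicator_apply]
    · intro z hz
      simp only [Function.mem_support, ne_eq, Set.indicator_apply_eq_zero, mem_closedBall,
        dist_zero_right, Classical.not_imp] at hz
      exact (hPmem z).2 ⟨hz.1.trans ht, hz.2⟩
  have hPpos : ∀ z ∈ P, 0 < ‖z‖ := by
    intro z hz
    rw [norm_pos_iff]
    rintro rfl
    exact ((hPmem 0).1 hz).2 hp0
  have hL : Function.locallyFinsuppWithin.logCounting D s =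
      ∑ z ∈ P, (poleOrd f z : ℝ) * Real.log (s * ‖z‖⁻¹) := by
    simp only [Function.locallyFinsuppWithin.logCounting, AddMonoidHom.coe_mk, ZeroHom.coe_mk]
    rw [hDp 0, hp0, finsum_eq_sum_of_support_subset (s := P)]
    · simp only [Nat.cast_zero, Int.cast_zero, zero_mul, add_zero]
      refine Finset.sum_congr rfl fun z hz => ?_
      rw [Function.locallyFinsuppWithin.toClosedBall_eval_within D
        (by simpa [abs_of_pos hs] using ((hPmem z).1 hz).1), hDp]
      simp
    · intro z hz
      simp only [Function.mem_support, ne_eq, mul_eq_zero, not_or, Int.cast_eq_zero] at hz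
      simpa [hP] using hz.1
  rw [hL, nevN, hn0]
  simp only [Nat.cast_zero, zero_mul, add_zero, sub_zero]
  have hint : ∫ t in (0:ℝ)..s, (nevn f t : ℝ) / t =
      ∫ t in (0:ℝ)..s, ∑ z ∈ P, (if ‖z‖ ≤ t then (poleOrd f z : ℝ) else 0) / t := by
    refine intervalIntegral.integral_congr fun t ht => ?_
    rw [Set.uIcc_of_le hs.le] at ht
    rw [hnt t ht.2, ← Finset.sum_div]
    push_cast
    rfl
  rw [hint, intervalIntegral.integral_finsetSum]
  · exact Finset.sum_congr rfl fun z hz =>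
      (integrable_piece _ _ _ (hPpos z hz) ((hPmem z).1 hz).1).2
  · exact fun z hz => (integrable_piece _ _ _ (hPpos z hz) ((hPmem z).1 hz).1).1

lemma circ_eq (r θ : ℝ) : circ r θ = circleMap 0 r θ := by
  simp [circ, circleMap]

lemma nevm_eq_s15 (f : ℂ → ℂ) (s : ℝ) : nevm f s = ValueDistribution.proximity f ⊤ s := by
  rw [ValueDistribution.proximity_top, Real.circleAverage_def, nevm, smul_eq_mul]
  simp only [circ_eq, logPlus, Real.posLog, max_comm]

lemma avg_abs_le (f : ℂ → ℂ) (hf : MeromorphicOn f Set.univ)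
    (h0 : AnalyticAt ℂ f 0) (hf0 : f 0 ≠ 0) (s : ℝ) (hs : 1 ≤ s) :
    (2 * Real.pi)⁻¹ * ∫ θ in (0:ℝ)..(2 * Real.pi), |Real.log ‖f (circ s θ)‖| ≤
      2 * (nevT f s + logPlus (1 / ‖f 0‖)) := by
  have hm : Meromorphic f := fun z => hf z trivial
  have hs0 : 0 < s := by linarith
  have e1 := ValueDistribution.characteristic_sub_characteristic_inv_of_ne_zero hm hs0.ne'
  rw [h0.meromorphicTrailingCoeffAt_of_ne_zero hf0] at e1
  have e2 : (2 * Real.pi)⁻¹ * ∫ θ in (0:ℝ)..(2 * Real.pi), |Real.log ‖f (circ s θ)‖| =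
      ValueDistribution.proximity f ⊤ s + ValueDistribution.proximity f⁻¹ ⊤ s := by
    rw [ValueDistribution.proximity_top, ValueDistribution.proximity_top,
      ← Real.circleAverage_add, Real.circleAverage_def, smul_eq_mul]
    · congr 1
      refine intervalIntegral.integral_congr fun θ _ => ?_
      simp only [circ_eq, Pi.add_apply, Pi.inv_apply, norm_inv, Real.posLog, Real.log_inv]
      rcases le_total 0 (Real.log ‖f (circleMap 0 s θ)‖) with h | h
      · simp [abs_of_nonneg h, h]
      · simp [abs_of_nonpos h, h]
    · exact (hf.mono_set (Set.subset_univ _)).circleIntegrable_posLog_norm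
    · exact (hf.inv.mono_set (Set.subset_univ _)).circleIntegrable_posLog_norm
  have e3 : 0 ≤ ValueDistribution.logCounting f⁻¹ ⊤ s :=
    ValueDistribution.logCounting_nonneg hs
  have e4 : 0 ≤ ValueDistribution.logCounting f ⊤ s :=
    ValueDistribution.logCounting_nonneg hs
  have e5 : - Real.log ‖f 0‖ ≤ logPlus (1 / ‖f 0‖) := by
    rw [logPlus, one_div, Real.log_inv]; exact le_max_left _ _
  have e6 : 0 ≤ logPlus (1 / ‖f 0‖) := le_max_right _ _
  rw [e2, nevT, nevm_eq_s15, nevN_eq_s15 f hf h0 s hs0]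
  simp only [ValueDistribution.characteristic, Pi.add_apply] at e1
  linarith

lemma kernel_bound (c : ℂ) (r s : ℝ) (hr : 1 ≤ r) (hs : r + ‖c‖ < s) (θ φ : ℝ) :
    |(2 * c * s * Complex.exp (θ * Complex.I) /
      ((circ s θ - circ r φ - c) * (circ s θ - circ r φ))).re| ≤
      2 * ‖c‖ * s / (s - r - ‖c‖) ^ 2 := by
  have hc := norm_nonneg c
  have hs0 : 0 < s := by linarith
  refine (Complex.abs_re_le_norm _).trans ?_
  have n1 : ‖circ s θ‖ = s := by simp [circ_eq, abs_of_pos hs0]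
  have n2 : ‖circ r φ‖ = r := by simp [circ_eq, abs_of_pos (by linarith : 0 < r)]
  have b2 : s - r ≤ ‖circ s θ - circ r φ‖ := by
    have := norm_sub_norm_le (circ s θ) (circ r φ); rwa [n1, n2] at this
  have b1 : s - r - ‖c‖ ≤ ‖circ s θ - circ r φ - c‖ := by
    have := norm_sub_norm_le (circ s θ - circ r φ) c; linarith
  have hd : 0 < s - r - ‖c‖ := by linarith
  rw [norm_div, norm_mul, norm_mul, norm_mul, norm_mul, Complex.norm_exp_ofReal_mul_I,
    Complex.norm_real, Real.norm_of_nonneg hs0.le, Complex.norm_ofNat, mul_one, pow_two]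
  have : s - r - ‖c‖ ≤ ‖circ s θ - circ r φ‖ := by linarith
  gcongr

/-- Bound on the `S₁` term from the differenced Poisson–Jensen formula: for `f`
meromorphic with `f(0) ≠ 0, ∞`, `c ∈ ℂ`, `r ≥ 1` and `s > r + |c|`,
`(1/2π) ∫₀^{2π} |(1/2π) ∫₀^{2π} log|f(se^{iθ})| Re(2cse^{iθ}/((se^{iθ}−re^{iφ}−c)(se^{iθ}−re^{iφ}))) dθ| dφ
  ≤ (4|c|s/(s−r−|c|)²) (T(s,f) + log⁺(1/|f(0)|))`. -/
theorem S1_term_bound (f : ℂ → ℂ) (hf : MeromorphicOn f Set.univ)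
    (h0 : AnalyticAt ℂ f 0) (hf0 : f 0 ≠ 0) (c : ℂ) (r s : ℝ)
    (hr : 1 ≤ r) (hs : r + ‖c‖ < s) :
    (2 * Real.pi)⁻¹ * ∫ φ in (0:ℝ)..(2 * Real.pi),
        |(2 * Real.pi)⁻¹ * ∫ θ in (0:ℝ)..(2 * Real.pi),
          Real.log ‖f (circ s θ)‖ *
            (2 * c * s * Complex.exp (θ * Complex.I) /
              ((circ s θ - circ r φ - c) * (circ s θ - circ r φ))).re| ≤
      4 * ‖c‖ * s / (s - r - ‖c‖) ^ 2 * (nevT f s + logPlus (1 / ‖f 0‖)) := by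
  have hc := norm_nonneg c
  have hs1 : 1 ≤ s := by linarith
  have hpi : 0 < 2 * Real.pi := Real.two_pi_pos
  have hA := avg_abs_le f hf h0 hf0 s hs1
  set B := 4 * ‖c‖ * s / (s - r - ‖c‖) ^ 2 * (nevT f s + logPlus (1 / ‖f 0‖)) with hB
  set K := 2 * ‖c‖ * s / (s - r - ‖c‖) ^ 2 with hK
  have hK0 : 0 ≤ K := by positivity
  have hKB : B = K * (2 * (nevT f s + logPlus (1 / ‖f 0‖))) := by rw [hB, hK]; ring
  have hI : IntervalIntegrable (fun θ => |Real.log ‖f (circ s θ)‖|) volume 0 (2 * Real.pi) := by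
    have := (hf.mono_set (Set.subset_univ (sphere (0:ℂ) |s|))).circleIntegrable_log_norm
    simp only [circ_eq]
    exact IntervalIntegrable.abs this
  have hin : ∀ φ : ℝ, |(2 * Real.pi)⁻¹ * ∫ θ in (0:ℝ)..(2 * Real.pi),
          Real.log ‖f (circ s θ)‖ *
            (2 * c * s * Complex.exp (θ * Complex.I) /
              ((circ s θ - circ r φ - c) * (circ s θ - circ r φ))).re| ≤ B := by
    intro φ
    rw [abs_mul, abs_of_pos (inv_pos.2 hpi), hKB]
    refine le_trans ?_ (mul_le_mul_of_nonneg_left hA hK0)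
    rw [mul_left_comm, ← intervalIntegral.integral_const_mul]
    refine mul_le_mul_of_nonneg_left ?_ (inv_pos.2 hpi).le
    rw [← Real.norm_eq_abs]
    refine intervalIntegral.norm_integral_le_of_norm_le hpi.le ?_ (hI.const_mul K)
    refine Filter.Eventually.of_forall fun θ _ => ?_
    rw [norm_mul, Real.norm_eq_abs, Real.norm_eq_abs, mul_comm]
    exact mul_le_mul_of_nonneg_right (kernel_bound c r s hr hs θ φ) (abs_nonneg _)
  have hout : ‖∫ φ in (0:ℝ)..(2 * Real.pi),
        |(2 * Real.pi)⁻¹ * ∫ θ in (0:ℝ)..(2 * Real.pi),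
          Real.log ‖f (circ s θ)‖ *
            (2 * c * s * Complex.exp (θ * Complex.I) /
              ((circ s θ - circ r φ - c) * (circ s θ - circ r φ))).re|‖ ≤
      B * |2 * Real.pi - 0| := by
    refine intervalIntegral.norm_integral_le_of_norm_le_const fun φ _ => ?_
    rw [Real.norm_eq_abs, abs_abs]
    exact hin φ
  rw [sub_zero, abs_of_pos hpi] at hout
  rw [inv_mul_le_iff₀ hpi, mul_comm _ B]
  exact (le_abs_self _).trans hout
end
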